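/- arXiv:2312.15647 — 2 statements merged into one kernel-verified Lean document; each statement's English description precedes it below -/
import Mathlib

section
/- Let (X,d) be a compact metric space, f: X → X a continuous map with the g-almost product property for some blowup function g, and φ: X → ℝ a continuous function. Then mdim_M^B-upper(X,f,d) = mdim_M^B-upper(⋃_{a∈L_φ} R_φ(a),f,d). -/
open MeasureTheory Filter Set Topology
open scoped ENNReal NNReal

noncomputable section

namespace MMD

variable {X : Type*}

/-! ### Bowen balls, Bowen topological entropy and metric mean dimension -/

/-- The Bowen ball `B_n(x,ε) = {y | d_n(x,y) < ε}` where `d_n` is the Bowen metric. -/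
def bowenBall [PseudoMetricSpace X] (f : X → X) (x : X) (n : ℕ) (ε : ℝ) : Set X :=
  {y | ∀ i < n, dist (f^[i] x) (f^[i] y) < ε}

/-- The weight sum `Σ_{(x,n) ∈ C} exp (-s n)` of a (countable) collection of Bowen balls,
encoded by its set of centers/lengths. -/
def coverSum (s : ℝ) (C : Set (X × ℕ)) : ℝ≥0∞ :=
  ∑' p : C, ENNReal.ofReal (Real.exp (-s * ((p : X × ℕ).2 : ℝ)))

/-- `m(Z,s,N,ε,f)`: infimum over countable (or finite) covers of `Z` by Bowen balls
`B_{n_i}(x_i,ε)` with `n_i ≥ N` of `Σ exp (-s n_i)`. -/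
def mB [PseudoMetricSpace X] (f : X → X) (Z : Set X) (s : ℝ) (N : ℕ) (ε : ℝ) : ℝ≥0∞ :=
  ⨅ (C : Set (X × ℕ)) (_ : C.Countable) (_ : ∀ p ∈ C, N ≤ p.2)
    (_ : Z ⊆ ⋃ p ∈ C, bowenBall f p.1 p.2 ε), coverSum s C

/-- `m(Z,s,ε) = lim_{N→∞} m(Z,s,N,ε,f)`; the limit of this monotone quantity is the sup. -/
def mBLim [PseudoMetricSpace X] (f : X → X) (Z : Set X) (s : ℝ) (ε : ℝ) : ℝ≥0∞ :=
  ⨆ N : ℕ, mB f Z s N ε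

/-- The Bowen topological entropy of `Z` at scale `ε`:
`h_top^B(Z,f,ε) = inf {s | m(Z,s,ε) = 0}`. -/
def hB [PseudoMetricSpace X] (f : X → X) (Z : Set X) (ε : ℝ) : ℝ :=
  sInf {s : ℝ | mBLim f Z s ε = 0}

/-- Upper Bowen metric mean dimension of `Z`. -/
def mdimUpper [PseudoMetricSpace X] (f : X → X) (Z : Set X) : ℝ :=
  limsup (fun ε : ℝ => hB f Z ε / |Real.log ε|) (𝓝[>] (0:ℝ))

/-- Lower Bowen metric mean dimension of `Z`. -/
def mdimLower [PseudoMetricSpace X] (f : X → X) (Z : Set X) : ℝ :=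
  liminf (fun ε : ℝ => hB f Z ε / |Real.log ε|) (𝓝[>] (0:ℝ))

/-! ### Finite measurable partitions and measure-theoretic entropy -/

/-- `P` is a finite measurable partition of `X` (mod `μ`): its elements are measurable,
they cover `X` up to a `μ`-null set, and they pairwise intersect in `μ`-null sets. -/
def IsPartition [MeasurableSpace X] (μ : Measure X) (P : Finset (Set X)) : Prop :=
  (∀ A ∈ P, MeasurableSet A) ∧ μ (Set.univ \ ⋃ A ∈ P, A) = 0 ∧
    ∀ A ∈ P, ∀ B ∈ P, A ≠ B → μ (A ∩ B) = 0

/-- Static entropy `H_μ(P) = -Σ_{A∈P} μ(A) log μ(A)`. -/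
def partEnt [MeasurableSpace X] (μ : Measure X) (P : Finset (Set X)) : ℝ :=
  ∑ A ∈ P, Real.negMulLog ((μ A).toReal)

/-- Join (common refinement) of two finite families of sets. -/
def joinParts (P Q : Finset (Set X)) : Finset (Set X) :=
  letI := Classical.decEq (Set X)
  (P ×ˢ Q).image fun p => p.1 ∩ p.2

/-- `dynJoin f P n = ⋁_{j=0}^{n-1} f^{-j} P`. -/
def dynJoin (f : X → X) (P : Finset (Set X)) : ℕ → Finset (Set X)
  | 0 => {Set.univ}
  | n + 1 =>
      letI := Classical.decEq (Set X)
      joinParts P ((dynJoin f P n).image fun A => f ⁻¹' A)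

/-- Measure-theoretic entropy of `f` w.r.t. the partition `P`:
`h_μ(f,P) = lim_n (1/n) H_μ(⋁_{j<n} f^{-j}P)` (the limit exists, hence equals the `limsup`). -/
def dynEnt [MeasurableSpace X] (μ : Measure X) (f : X → X) (P : Finset (Set X)) : ℝ :=
  limsup (fun n : ℕ => partEnt μ (dynJoin f P n) / n) atTop

/-- `diam P < ε`, i.e. every element of `P` has diameter `< ε`. -/
def partDiamLt [PseudoMetricSpace X] (P : Finset (Set X)) (ε : ℝ) : Prop :=
  ∀ A ∈ P, Metric.diam A < ε

/-- `inf_{ξ : diam ξ < ε} h_μ(f,ξ)`, the infimum over all finite measurable partitions of `X`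
with diameter `< ε`. -/
def infEnt [PseudoMetricSpace X] [MeasurableSpace X] (μ : Measure X) (f : X → X) (ε : ℝ) : ℝ :=
  sInf (dynEnt μ f '' {P : Finset (Set X) | IsPartition μ P ∧ partDiamLt P ε})

/-! ### Empirical measures, generic points and saturated sets -/

/-- The `n`-th empirical measure `E_n(x) = (1/n) Σ_{j<n} δ_{f^j x}` (defined as `E_1(x)`
for `n = 0`, a junk value). -/
def empMeasure [MeasurableSpace X] (f : X → X) (x : X) (n : ℕ) : Measure X :=
  ((max n 1 : ℕ) : ℝ≥0∞)⁻¹ • ∑ j ∈ Finset.range (max n 1), Measure.dirac (f^[j] x)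

instance [MeasurableSpace X] (f : X → X) (x : X) (n : ℕ) :
    IsProbabilityMeasure (empMeasure f x n) := by
  constructor
  have h1 : (0:ℕ) < max n 1 := lt_of_lt_of_le one_pos (le_max_right n 1)
  have hsum : (∑ j ∈ Finset.range (max n 1), Measure.dirac (f^[j] x)) Set.univ
      = ((max n 1 : ℕ) : ℝ≥0∞) := by
    rw [Measure.finset_sum_apply]
    simp
  simp only [empMeasure, Measure.smul_apply, smul_eq_mul, hsum]
  exact ENNReal.inv_mul_cancel (by exact_mod_cast h1.ne') (by simp)

/-- The `n`-th empirical measure as a probability measure. -/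
def empProb [MeasurableSpace X] (f : X → X) (x : X) (n : ℕ) : ProbabilityMeasure X :=
  ⟨empMeasure f x n, inferInstance⟩

/-- `V_f(x)`: the set of weak* limit points of the sequence of empirical measures of `x`. -/
def Vf [MetricSpace X] [MeasurableSpace X] [BorelSpace X] (f : X → X) (x : X) :
    Set (ProbabilityMeasure X) :=
  {ν | MapClusterPt ν atTop (empProb f x)}

/-- The saturated set `G_K = {x | V_f(x) = K}`. -/
def GK [MetricSpace X] [MeasurableSpace X] [BorelSpace X] (f : X → X)
    (K : Set (ProbabilityMeasure X)) : Set X :=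
  {x | Vf f x = K}

/-- The generic set `G_μ = {x | V_f(x) = {μ}}`. -/
def genSet [MetricSpace X] [MeasurableSpace X] [BorelSpace X] (f : X → X)
    (μ : ProbabilityMeasure X) : Set X :=
  GK f {μ}

/-! ### Invariant measures, supports, measure center, omega-limit sets -/

/-- `μ` is an `f`-invariant (Borel probability) measure. -/
def InvariantProb [MeasurableSpace X] (f : X → X) (μ : ProbabilityMeasure X) : Prop :=
  Measure.map f (μ : Measure X) = (μ : Measure X)

/-- The set `M_f(X)` of invariant probability measures. -/
def invSet [MeasurableSpace X] (f : X → X) : Set (ProbabilityMeasure X) :=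
  {μ | InvariantProb f μ}

/-- The support of a measure: points all of whose neighborhoods have positive measure. -/
def measSupport [TopologicalSpace X] [MeasurableSpace X] (μ : Measure X) : Set X :=
  {x | ∀ U ∈ 𝓝 x, 0 < μ U}

/-- The measure center `C_f(X) = closure (⋃_{μ ∈ M_f(X)} S_μ)`. -/
def measCenter [TopologicalSpace X] [MeasurableSpace X] (f : X → X) : Set X :=
  closure (⋃ μ ∈ invSet f, measSupport (μ : Measure X))

/-- The omega-limit set `ω_f(x) = ⋂_n closure {f^k x : k ≥ n}`. -/
def omegaSet [TopologicalSpace X] (f : X → X) (x : X) : Set X :=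
  ⋂ n : ℕ, closure {y | ∃ k, n ≤ k ∧ f^[k] x = y}

/-- The set of points whose omega-limit set contains the measure center. -/
def CtrSet [TopologicalSpace X] [MeasurableSpace X] (f : X → X) : Set X :=
  {x | measCenter f ⊆ omegaSet f x}

/-! ### Blow-up functions and the g-almost product property -/

/-- A blowup function: nondecreasing, unbounded, `g n < n` and `g n / n → 0`. -/
structure IsBlowup (g : ℕ → ℕ) : Prop where
  mono : Monotone g
  unbounded : ∀ C : ℕ, ∃ n, C < g n
  lt_self : ∀ n, 0 < n → g n < n
  ratio_tendsto_zero : Tendsto (fun n : ℕ => (g n : ℝ) / n) atTop (𝓝 0)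

/-- The g-blowup `B_n(g;x,ε)` of the Bowen ball `B_n(x,ε)`. -/
def blowupBall [PseudoMetricSpace X] (f : X → X) (g : ℕ → ℕ) (x : X) (n : ℕ) (ε : ℝ) :
    Set X :=
  {y | ∃ Λ : Finset ℕ, Λ ⊆ Finset.range n ∧
    letI := Classical.decEq ℕ
    (Finset.range n \ Λ).card ≤ g n ∧ ∀ j ∈ Λ, dist (f^[j] x) (f^[j] y) ≤ ε}

/-- The g-almost product property. -/
def GAlmostProduct [PseudoMetricSpace X] (f : X → X) (g : ℕ → ℕ) : Prop :=
  ∃ m : ℝ → ℕ, (∀ s t : ℝ, 0 < s → s ≤ t → m t ≤ m s) ∧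
    ∀ (k : ℕ) (x : ℕ → X) (ε : ℕ → ℝ) (n : ℕ → ℕ),
      (∀ j < k, 0 < ε j) → (∀ j < k, m (ε j) ≤ n j) →
      (⋂ j ∈ Finset.range k,
        (f^[∑ i ∈ Finset.range j, n i] ⁻¹' blowupBall f g (x j) (n j) (ε j))).Nonempty

/-! ### Separated sets and Pfister–Sullivan quantities -/

/-- The number of times `0 ≤ j < n` at which the orbits of `x` and `y` are `ε`-apart. -/
def sepCount [PseudoMetricSpace X] (f : X → X) (x y : X) (n : ℕ) (ε : ℝ) : ℕ :=
  letI := Classical.decPred fun j : ℕ => ε < dist (f^[j] x) (f^[j] y)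
  ((Finset.range n).filter fun j => ε < dist (f^[j] x) (f^[j] y)).card

/-- `N(F; δ, n, ε)`: maximal cardinality of a `(δ,n,ε)`-separated subset of
`X_{n,F} = {x | E_n(x) ∈ F}`. -/
def NsepD [MetricSpace X] [MeasurableSpace X] [BorelSpace X] (f : X → X)
    (F : Set (ProbabilityMeasure X)) (δ : ℝ) (n : ℕ) (ε : ℝ) : ℕ :=
  sSup {c : ℕ | ∃ E : Finset X, (↑E : Set X) ⊆ {x | empProb f x n ∈ F} ∧
    (∀ x ∈ E, ∀ y ∈ E, x ≠ y → δ * n ≤ (sepCount f x y n ε : ℝ)) ∧ E.card = c}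

/-- `N(F; n, ε)`: maximal cardinality of an `(n,ε)`-separated subset of `X_{n,F}`. -/
def NsepP [MetricSpace X] [MeasurableSpace X] [BorelSpace X] (f : X → X)
    (F : Set (ProbabilityMeasure X)) (n : ℕ) (ε : ℝ) : ℕ :=
  sSup {c : ℕ | ∃ E : Finset X, (↑E : Set X) ⊆ {x | empProb f x n ∈ F} ∧
    (∀ x ∈ E, ∀ y ∈ E, x ≠ y → ∃ i < n, ε < dist (f^[i] x) (f^[i] y)) ∧ E.card = c}

/-- `PS-bar(μ,δ,ε) = inf_{F ∋ μ} limsup_n (1/n) ln N(F;δ,n,ε)`. -/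
def PSbar [MetricSpace X] [MeasurableSpace X] [BorelSpace X] (f : X → X)
    (μ : ProbabilityMeasure X) (δ ε : ℝ) : ℝ :=
  sInf ((fun F => limsup (fun n : ℕ => Real.log (NsepD f F δ n ε) / n) atTop) ''
    {F : Set (ProbabilityMeasure X) | F ∈ 𝓝 μ})

/-! ### Convex combinations of probability measures -/

/-- The convex hull `cov{μ_1,…,μ_m}` of finitely many probability measures. -/
def convexCombos [MeasurableSpace X] {m : ℕ} (μ : Fin m → ProbabilityMeasure X) :
    Set (ProbabilityMeasure X) :=
  {ν | ∃ t : Fin m → ℝ≥0∞, (∑ i, t i) = 1 ∧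
    (ν : Measure X) = ∑ i, t i • (μ i : Measure X)}

/-- The convex combination `θ μ + (1-θ) ν` of two probability measures (with `θ`
clamped into `[0,1]`). -/
def mixP [MeasurableSpace X] (μ ν : ProbabilityMeasure X) (θ : ℝ) : ProbabilityMeasure X :=
  ⟨ENNReal.ofReal (min (max θ 0) 1) • (μ : Measure X)
      + ENNReal.ofReal (1 - min (max θ 0) 1) • (ν : Measure X), by
    constructor
    set t := min (max θ 0) 1 with ht
    have h0 : 0 ≤ t := le_min (le_max_right θ 0) zero_le_one
    have h1 : t ≤ 1 := min_le_right _ _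
    rw [Measure.add_apply, Measure.smul_apply, Measure.smul_apply, measure_univ, measure_univ,
      smul_eq_mul, smul_eq_mul, mul_one, mul_one, ← ENNReal.ofReal_add h0 (by linarith)]
    have : t + (1 - t) = 1 := by ring
    rw [this, ENNReal.ofReal_one]⟩

/-- Condition A.3: for invariant `μ, ν` with `α μ ≠ α ν`, the map
`θ ↦ α(θμ + (1-θ)ν)` is not constant on any nondegenerate subinterval of `[0,1]`. -/
def CondA3 [MeasurableSpace X] (f : X → X) (α : ProbabilityMeasure X → ℝ) : Prop :=
  ∀ μ ∈ invSet f, ∀ ν ∈ invSet f, α μ ≠ α ν →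
    ∀ a b : ℝ, 0 ≤ a → a < b → b ≤ 1 →
      ¬ (∀ s ∈ Set.Icc a b, ∀ t ∈ Set.Icc a b, α (mixP μ ν s) = α (mixP μ ν t))

end MMD

end

open MMD MeasureTheory Filter Set Topology
open scoped ENNReal NNReal

noncomputable section

/-- `∫ φ dμ` for a probability measure `μ`. -/
noncomputable def intPhi {X : Type*} [MeasurableSpace X] (φ : X → ℝ)
    (μ : ProbabilityMeasure X) : ℝ :=
  ∫ x, φ x ∂(μ : Measure X)

/-- The level set `R_φ(a)` of the Birkhoff averages of `φ`. -/
def Rphi {X : Type*} (f : X → X) (φ : X → ℝ) (a : ℝ) : Set X :=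
  {x | Tendsto (fun n : ℕ => (∑ i ∈ Finset.range n, φ (f^[i] x)) / n) atTop (𝓝 a)}

/-- The irregular set `I_φ` of `φ`: points where the Birkhoff average does not converge. -/
def Iphi {X : Type*} (f : X → X) (φ : X → ℝ) : Set X :=
  {x | ¬ ∃ a : ℝ, Tendsto (fun n : ℕ => (∑ i ∈ Finset.range n, φ (f^[i] x)) / n) atTop (𝓝 a)}

/-- `H_φ(a,ε) = (1/|log ε|) sup_{μ ∈ M_f(X,φ,a)} inf_{diam ξ < ε} h_μ(f,ξ)`. -/
noncomputable def Hphi {X : Type*} [MetricSpace X] [MeasurableSpace X] [BorelSpace X]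
    (f : X → X) (φ : X → ℝ) (a : ℝ) (ε : ℝ) : ℝ :=
  (1 / |Real.log ε|) *
    sSup ((fun ν : ProbabilityMeasure X => infEnt (ν : Measure X) f ε) ''
      {ν | ν ∈ invSet f ∧ intPhi φ ν = a})


/-! ### Elementary facts on Bowen balls and covers -/

lemma isOpen_bowenBall' {X : Type*} [MetricSpace X] (f : X → X) (hf : Continuous f) (x : X) (n : ℕ)
    (ε : ℝ) : IsOpen (bowenBall f x n ε) := by
  have : bowenBall f x n ε = ⋂ i ∈ Finset.range n, {y | dist (f^[i] x) (f^[i] y) < ε} := by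
    ext y; simp [bowenBall]
  rw [this]
  refine isOpen_biInter_finset fun i _ => ?_
  exact isOpen_lt (continuous_const.dist (hf.iterate i)) continuous_const

lemma exists_finite_span {X : Type*} [MetricSpace X] [CompactSpace X] (f : X → X)
    (hf : Continuous f) (n : ℕ) (ε : ℝ) (hε : 0 < ε) :
    ∃ G : Finset X, ∀ x, ∃ y ∈ G, x ∈ bowenBall f y n ε := by
  obtain ⟨G, -, hG⟩ := isCompact_univ.elim_nhds_subcover (fun y : X => bowenBall f y n ε)
    (fun y _ => (isOpen_bowenBall' f hf y n ε).mem_nhds (by intro i _; simpa using hε))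
  refine ⟨G, fun x => ?_⟩
  have := hG (mem_univ x)
  simpa using this

lemma coverSum_finset_le {X : Type*} (s : ℝ) (n : ℕ) (F : Finset X) :
    coverSum s ((fun y => (y, n)) '' (F : Set X)) ≤
      (F.card : ℝ≥0∞) * ENNReal.ofReal (Real.exp (-s * n)) := by
  classical
  have : ((fun y => (y, n)) '' (F : Set X)) = ((F.image (fun y => (y, n)) : Finset (X × ℕ)) : Set (X × ℕ)) := by
    simp
  rw [this, coverSum]
  rw [Finset.tsum_subtype' (F.image (fun y => (y, n))) (fun p : X × ℕ => ENNReal.ofReal (Real.exp (-s * (p.2 : ℝ))))]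
  rw [Finset.sum_image (by intro a _ b _ h; simpa using h)]
  simp

lemma mB_le_span {X : Type*} [MetricSpace X] (f : X → X) (s : ℝ) (N n : ℕ) (hn : N ≤ n) (ε : ℝ)
    (F : Finset X) (hF : ∀ x, ∃ y ∈ F, x ∈ bowenBall f y n ε) :
    mB f univ s N ε ≤ (F.card : ℝ≥0∞) * ENNReal.ofReal (Real.exp (-s * n)) := by
  refine le_trans ?_ (coverSum_finset_le s n F)
  refine iInf_le_of_le _ (iInf_le_of_le ?_ (iInf_le_of_le ?_ (iInf_le_of_le ?_ le_rfl)))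
  · exact (F.finite_toSet.image _).countable
  · rintro p ⟨y, _, rfl⟩; exact hn
  · intro x _
    obtain ⟨y, hy, hxy⟩ := hF x
    simp only [mem_iUnion]
    exact ⟨(y, n), ⟨y, hy, rfl⟩, hxy⟩

lemma span_lower {X : Type*} [MetricSpace X] (f : X → X) (s : ℝ) (ε : ℝ)
    (h : mBLim f univ s ε ≠ 0) :
    ∃ c : ℝ, 0 < c ∧ ∃ N0 : ℕ, ∀ n ≥ N0, ∀ F : Finset X,
      (∀ x, ∃ y ∈ F, x ∈ bowenBall f y n ε) → c * Real.exp (s * n) ≤ F.card := by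
  have : ∃ N, mB f univ s N ε ≠ 0 := by
    by_contra hc; push Not at hc
    exact h (by simp [mBLim, hc])
  obtain ⟨N0, hN⟩ := this
  have hm : min (mB f univ s N0 ε) 1 ≠ ⊤ := by simp
  have hm0 : min (mB f univ s N0 ε) 1 ≠ 0 := by
    simp [min_eq_iff, hN]
  refine ⟨(min (mB f univ s N0 ε) 1).toReal, ENNReal.toReal_pos hm0 hm, N0, fun n hn F hF => ?_⟩
  have h1 := (min_le_left _ 1).trans (mB_le_span f s N0 n hn ε F hF)
  have h2 : (F.card : ℝ≥0∞) * ENNReal.ofReal (Real.exp (-s * n))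
      = ENNReal.ofReal (F.card * Real.exp (-s * n)) := by
    rw [ENNReal.ofReal_mul (by positivity), ENNReal.ofReal_natCast]
  rw [h2] at h1
  have h3 := ENNReal.toReal_le_of_le_ofReal (by positivity) h1
  calc _ ≤ (F.card * Real.exp (-s * n)) * Real.exp (s * n) := by gcongr
    _ = F.card := by rw [mul_assoc, ← Real.exp_add]; simp

lemma mB_mono_set {X : Type*} [MetricSpace X] (f : X → X) (Z W : Set X) (h : Z ⊆ W) (s : ℝ)
    (ε : ℝ) : mBLim f Z s ε ≤ mBLim f W s ε := by
  refine iSup_mono fun N => ?_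
  refine iInf_mono fun C => iInf_mono fun h1 => iInf_mono fun h2 => ?_
  exact le_iInf fun h3 => iInf_le_of_le (h.trans h3) le_rfl

lemma neg_not_mem {X : Type*} [MetricSpace X] [Nonempty X] (f : X → X) (s : ℝ) (hs : s < 0)
    (ε : ℝ) : mBLim f univ s ε ≠ 0 := by
  have : 1 ≤ mB f univ s 0 ε := by
    refine le_iInf fun C => le_iInf fun _ => le_iInf fun _ => le_iInf fun hC => ?_
    obtain ⟨x⟩ := ‹Nonempty X›
    obtain ⟨p, hp, -⟩ := mem_iUnion₂.1 (hC (mem_univ x))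
    refine le_trans ?_ (ENNReal.le_tsum (⟨p, hp⟩ : C))
    rw [ENNReal.one_le_ofReal]
    apply Real.one_le_exp
    have : (0:ℝ) ≤ p.2 := by positivity
    simp only; nlinarith
  have h2 : 1 ≤ mBLim f univ s ε := this.trans (le_iSup (fun N => mB f univ s N ε) 0)
  intro h; rw [h] at h2; simp at h2

/-- the set of admissible exponents for the whole space is nonempty. -/
lemma exists_mem_univ {X : Type*} [MetricSpace X] [CompactSpace X] (f : X → X)
    (ε : ℝ) (hε : 0 < ε) : ∃ s, mBLim f univ s ε = 0 := by
  classical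
  obtain ⟨T, hT⟩ := exists_finite_span (id : X → X) continuous_id 1 (ε/2) (by positivity)
  choose c hcT hc using hT
  -- spanning sets of cardinality at most `M ^ n`
  have key : ∀ n : ℕ, ∃ F : Finset X, (∀ x, ∃ y ∈ F, x ∈ bowenBall f y n ε) ∧ F.card ≤ T.card ^ n := by
    intro n
    by_cases hX : Nonempty X
    swap
    · exact ⟨∅, fun x => (hX ⟨x⟩).elim, by simp⟩
    let code : X → (Fin n → T) := fun x i => ⟨c (f^[i] x), hcT _⟩
    let rep : (Fin n → T) → X := Function.invFun code
    refine ⟨Finset.univ.image rep, fun x => ⟨rep (code x), by simp, ?_⟩, ?_⟩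
    · intro i hi
      have h1 : code (rep (code x)) = code x := Function.invFun_eq ⟨x, rfl⟩
      have h2 := congrArg Subtype.val (congrFun h1 ⟨i, hi⟩)
      simp only [code] at h2
      have h3 := hc (f^[i] x) 0 one_pos
      have h4 := hc (f^[i] (rep (code x))) 0 one_pos
      simp only [code] at h4
      rw [h2] at h4
      simp only [Function.iterate_zero, id] at h3 h4
      have := dist_triangle_left (f^[i] (rep (code x))) (f^[i] x) (c (f^[i] x))
      simp only [code] at this ⊢
      linarith
    · refine Finset.card_image_le.trans ?_
      simp
  have hM0 : (0:ℝ) < T.card + 1 := by positivity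
  refine ⟨Real.log (T.card + 1) + 1, ?_⟩
  rw [mBLim, ENNReal.iSup_eq_zero]
  intro N
  set s := Real.log (T.card + 1) + 1 with hs
  have h1 : ∀ n ≥ N, mB f univ s N ε ≤ ENNReal.ofReal (Real.exp (-1 * n)) := by
    intro n hn
    obtain ⟨F, hF, hcard⟩ := key n
    refine (mB_le_span f s N n hn ε F hF).trans ?_
    rw [← ENNReal.ofReal_natCast, ← ENNReal.ofReal_mul (by positivity)]
    apply ENNReal.ofReal_le_ofReal
    have h5 : (F.card : ℝ) ≤ (T.card + 1) ^ n := by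
      calc (F.card : ℝ) ≤ (T.card : ℝ) ^ n := by exact_mod_cast hcard
        _ ≤ _ := by gcongr; linarith
    have h6 : ((T.card : ℝ) + 1) ^ n = Real.exp (Real.log (T.card + 1) * n) := by
      rw [mul_comm, Real.exp_nat_mul, Real.exp_log hM0]
    calc _ ≤ Real.exp (Real.log (T.card + 1) * n) * Real.exp (-s * n) := by
            rw [← h6]; gcongr
      _ = _ := by rw [← Real.exp_add]; congr 1; rw [hs]; ring
  have h2 : Tendsto (fun n : ℕ => ENNReal.ofReal (Real.exp (-1 * n))) atTop (𝓝 0) := by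
    have : Tendsto (fun n : ℕ => Real.exp (-1 * (n:ℝ))) atTop (𝓝 0) := by
      have := Real.tendsto_exp_neg_atTop_nhds_zero.comp (tendsto_natCast_atTop_atTop (R := ℝ))
      refine this.congr fun n => by simp
    simpa using ENNReal.tendsto_ofReal this
  have := ge_of_tendsto h2 (eventually_atTop.2 ⟨N, h1⟩)
  simpa using this


/-! ### Hamming separated sets -/

open Classical in
/-- number of times the orbits are at least `r`-apart -/
def hamCount {X : Type*} [MetricSpace X] (f : X → X) (n : ℕ) (r : ℝ) (x y : X) : ℕ :=
  ((Finset.range n).filter fun i => r ≤ dist (f^[i] x) (f^[i] y)).card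

/-- `(m, n, r)` Hamming separated -/
def HamSep {X : Type*} [MetricSpace X] (f : X → X) (n m : ℕ) (r : ℝ) (E : Finset X) : Prop :=
  ∀ x ∈ E, ∀ y ∈ E, x ≠ y → m < hamCount f n r x y

/-- counting words with few marked letters -/
lemma code_count {T : Type*} [Fintype T] [DecidableEq T] (n m : ℕ) (t : ℝ) (ht0 : 0 < t) (ht1 : t ≤ 1)
    (I : Finset (Fin n → Option T))
    (hI : ∀ c ∈ I, (Finset.univ.filter fun i => c i ≠ none).card ≤ m) :
    (I.card : ℝ) * t ^ m ≤ (1 + t * Fintype.card T) ^ n := by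
  let w : Option T → ℝ := fun o => if o = none then 1 else t
  have hw : ∀ o, 0 ≤ w o := fun o => by simp only [w]; split_ifs <;> positivity
  have h1 : ∑ c : Fin n → Option T, ∏ i, w (c i) = (1 + t * Fintype.card T) ^ n := by
    have := Finset.prod_univ_sum (fun _ : Fin n => (Finset.univ : Finset (Option T))) (fun _ o => w o)
    rw [Fintype.piFinset_univ] at this
    rw [← this]
    simp [w, Fintype.sum_option, mul_comm]
  rw [← h1]
  calc (I.card : ℝ) * t ^ m = ∑ c ∈ I, t ^ m := by simp
    _ ≤ ∑ c ∈ I, ∏ i, w (c i) := by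
        refine Finset.sum_le_sum fun c hc => ?_
        have : ∏ i, w (c i) = t ^ (Finset.univ.filter fun i => c i ≠ none).card := by
          simp only [w]
          rw [Finset.prod_ite]
          simp
        rw [this]
        exact pow_le_pow_of_le_one ht0.le ht1 (hI c hc)
    _ ≤ _ := Finset.sum_le_sum_of_subset_of_nonneg (Finset.subset_univ _)
        (fun c _ _ => Finset.prod_nonneg fun i _ => hw _)

lemma hamming_extract {X : Type*} [MetricSpace X] [CompactSpace X] [Nonempty X] (f : X → X)
    (hf : Continuous f) (r : ℝ) (hr : 0 < r) :
    ∃ M : ℕ, ∀ (n m : ℕ) (t : ℝ), 0 < t → t ≤ 1 → ∃ E F : Finset X, HamSep f n m r E ∧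
      (∀ x, ∃ y ∈ F, x ∈ bowenBall f y n (3 * r)) ∧
      (F.card : ℝ) * t ^ m ≤ E.card * (1 + t * M) ^ n := by
  classical
  obtain ⟨T, hT⟩ := exists_finite_span (id : X → X) continuous_id 1 r hr
  choose c hcT hc using hT
  refine ⟨T.card, fun n m t ht0 ht1 => ?_⟩
  obtain ⟨G, hG⟩ := exists_finite_span f hf n r hr
  -- maximal Hamming separated subset of `G`
  obtain ⟨E, hE, hmax⟩ := Finset.exists_max_image (G.powerset.filter (HamSep f n m r)) Finset.card
    ⟨∅, by simp [HamSep]⟩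
  simp only [Finset.mem_filter, Finset.mem_powerset] at hE hmax
  have hcov : ∀ z ∈ G, ∃ e ∈ E, hamCount f n r e z ≤ m := by
    intro z hz
    by_contra hcon
    push Not at hcon
    have hzE : z ∉ E := by
      intro hzE
      have := hcon z hzE
      have h0 : hamCount f n r z z = 0 := by
        simp [hamCount, not_le.2 hr]
      omega
    have hsym : ∀ x y, hamCount f n r x y = hamCount f n r y x := by
      intro x y; simp only [hamCount, dist_comm]
    have := hmax (insert z E) ⟨Finset.insert_subset hz hE.1, ?_⟩
    · rw [Finset.card_insert_of_notMem hzE] at this; omega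
    · intro x hx y hy hxy
      rw [Finset.mem_insert] at hx hy
      rcases hx with rfl | hx <;> rcases hy with rfl | hy
      · exact absurd rfl hxy
      · rw [hsym]; exact hcon y hy
      · exact hcon x hx
      · exact hE.2 x hx y hy hxy
  let code : X → X → (Fin n → Option T) := fun e z i =>
    if r ≤ dist (f^[i] e) (f^[i] z) then some ⟨c (f^[i] z), hcT _⟩ else none
  let Ge : X → Finset X := fun e => G.filter fun z => hamCount f n r e z ≤ m
  let I : X → Finset (Fin n → Option T) := fun e => (Ge e).image (code e)
  let rep : X → (Fin n → Option T) → X := fun e => Function.invFun (code e)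
  refine ⟨E, E.biUnion fun e => (I e).image (rep e), hE.2, ?_, ?_⟩
  · intro x
    obtain ⟨z, hz, hxz⟩ := hG x
    obtain ⟨e, he, hez⟩ := hcov z hz
    refine ⟨rep e (code e z), ?_, ?_⟩
    · simp only [Finset.mem_biUnion]
      refine ⟨e, he, Finset.mem_image_of_mem _ (Finset.mem_image_of_mem _ ?_)⟩
      simp [Ge, hz, hez]
    · intro i hi
      have h1 : code e (rep e (code e z)) = code e z := Function.invFun_eq ⟨z, rfl⟩
      have h2 := congrFun h1 ⟨i, hi⟩
      generalize rep e (code e z) = y at h2 ⊢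
      have hd : dist (f^[i] y) (f^[i] z) < 2 * r := by
        simp only [code] at h2
        split_ifs at h2 with ha hb hb
        · have h3 := hc (f^[i] z) 0 one_pos
          have h4 := hc (f^[i] y) 0 one_pos
          simp only [Option.some.injEq, Subtype.mk.injEq] at h2
          rw [h2] at h4
          simp only [Function.iterate_zero, id] at h3 h4
          have := dist_triangle_left (f^[i] y) (f^[i] z) (c (f^[i] z))
          linarith
        · have := dist_triangle_left (f^[i] y) (f^[i] z) (f^[i] e)
          linarith
      have := hxz i hi
      have := dist_triangle (f^[i] y) (f^[i] z) (f^[i] x)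
      linarith
  · have h1 : ∀ e, ((I e).card : ℝ) * t ^ m ≤ (1 + t * T.card) ^ n := by
      intro e
      have := code_count n m t ht0 ht1 (I e) ?_
      · simpa using this
      intro w hw
      simp only [I, Finset.mem_image, Ge, Finset.mem_filter] at hw
      obtain ⟨z, ⟨-, hz⟩, rfl⟩ := hw
      refine le_trans ?_ hz
      refine Finset.card_le_card_of_injOn (fun i => (i : ℕ)) ?_ ?_
      · intro i hi
        simp [code] at hi ⊢
        exact hi
      · intro i _ j _ h; exact Fin.ext h
    have h2 : ((E.biUnion fun e => (I e).image (rep e)).card : ℝ) ≤ ∑ e ∈ E, ((I e).card : ℝ) := by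
      have : (E.biUnion fun e => (I e).image (rep e)).card ≤ ∑ e ∈ E, (I e).card :=
        Finset.card_biUnion_le.trans (Finset.sum_le_sum fun e _ => Finset.card_image_le)
      exact_mod_cast this
    calc _ ≤ (∑ e ∈ E, ((I e).card : ℝ)) * t ^ m := by gcongr
      _ = ∑ e ∈ E, ((I e).card : ℝ) * t ^ m := by rw [Finset.sum_mul]
      _ ≤ ∑ e ∈ E, (1 + t * T.card) ^ n := Finset.sum_le_sum fun e _ => h1 e
      _ = _ := by simp

/-- many Hamming separated points, for all large `n` -/
lemma hamming_many {X : Type*} [MetricSpace X] [CompactSpace X] [Nonempty X] (f : X → X)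
    (hf : Continuous f) (g : ℕ → ℕ) (hg : IsBlowup g) (r : ℝ) (hr : 0 < r) (s s' : ℝ) (hss : s' < s)
    (h : mBLim f univ s (3 * r) ≠ 0) :
    ∃ N : ℕ, ∀ n ≥ N, ∃ E : Finset X, HamSep f n (2 * g n) r E ∧ Real.exp (s' * n) ≤ E.card := by
  obtain ⟨c, hc, N0, hN0⟩ := span_lower f s (3 * r) h
  obtain ⟨M, hM⟩ := hamming_extract f hf r hr
  set γ := s - s' with hγ
  have hγ0 : 0 < γ := by linarith
  obtain ⟨t, ht0, ht1, htM⟩ : ∃ t : ℝ, 0 < t ∧ t ≤ 1 ∧ t * M ≤ γ / 4 := by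
    refine ⟨min 1 (γ / 4 / (M + 1)), by positivity, min_le_left _ _, ?_⟩
    calc min 1 (γ / 4 / (M + 1)) * M ≤ (γ / 4 / (M + 1)) * (M + 1) := by
          gcongr
          · exact min_le_right _ _
          · linarith
      _ = γ / 4 := by field_simp
  have hlt : Tendsto (fun n : ℕ => 2 * ((g n : ℝ) / n) * (-Real.log t)) atTop (𝓝 0) := by
    have := (hg.ratio_tendsto_zero.const_mul 2).mul_const (-Real.log t)
    simpa using this
  have hlc : Tendsto (fun n : ℕ => (-Real.log c) / (n:ℝ)) atTop (𝓝 0) :=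
    tendsto_const_div_atTop_nhds_zero_nat _
  have e1 := hlt.eventually_lt_const (show (0:ℝ) < γ / 4 by positivity)
  have e2 := hlc.eventually_lt_const (show (0:ℝ) < γ / 4 by positivity)
  obtain ⟨N, hN⟩ := eventually_atTop.1 ((e1.and e2).and (eventually_ge_atTop (max N0 1)))
  refine ⟨N, fun n hn => ?_⟩
  obtain ⟨⟨h1, h2⟩, h3⟩ := hN n hn
  obtain ⟨E, F, hE, hF, hEF⟩ := hM n (2 * g n) t ht0 ht1
  refine ⟨E, hE, ?_⟩
  have hn0 : (0:ℝ) < n := by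
    have : 0 < n := by have := le_max_right N0 1; omega
    exact_mod_cast this
  have hF' := hN0 n ((le_max_left _ _).trans h3) F hF
  have h4 : (1 + t * (M:ℝ)) ^ n ≤ Real.exp (γ / 4 * n) := by
    rw [mul_comm (γ / 4) (n:ℝ), Real.exp_nat_mul]
    gcongr
    have := Real.add_one_le_exp (γ / 4)
    linarith
  have h5 : t ^ (2 * g n) = Real.exp (2 * g n * Real.log t) := by
    rw [show (2 * (g n:ℝ)) = ((2 * g n : ℕ) : ℝ) by push_cast; ring, Real.exp_nat_mul, Real.exp_log ht0]
  have h7 : Real.exp (Real.log c + s * n + 2 * g n * Real.log t - γ / 4 * n) ≤ E.card := by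
    have : c * Real.exp (s * n) * t ^ (2 * g n) ≤ E.card * Real.exp (γ / 4 * n) :=
      calc _ ≤ (F.card : ℝ) * t ^ (2 * g n) := by gcongr
        _ ≤ _ := hEF
        _ ≤ _ := by gcongr
    rw [Real.exp_sub, Real.exp_add, Real.exp_add, Real.exp_log hc, ← h5, div_le_iff₀ (Real.exp_pos _)]
    exact this
  refine le_trans (Real.exp_le_exp.2 ?_) h7
  rw [div_lt_iff₀ hn0] at h2
  have h8 : 2 * (g n : ℝ) * (-Real.log t) < γ / 4 * n := by
    have : 2 * ((g n : ℝ) / n) * (-Real.log t) = (2 * (g n : ℝ) * (-Real.log t)) / n := by ring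
    rw [this, div_lt_iff₀ hn0] at h1
    exact h1
  have h9 : s = s' + γ := by rw [hγ]; ring
  rw [h9]
  have : 0 < γ * n := by positivity
  nlinarith

/-- pigeonhole: many separated points with nearly the same Birkhoff average -/
lemma hamming_pigeon {X : Type*} [MetricSpace X] [CompactSpace X] [Nonempty X] (f : X → X)
    (hf : Continuous f) (g : ℕ → ℕ) (hg : IsBlowup g) (φ : X → ℝ) (B : ℝ) (hB : ∀ x, |φ x| ≤ B)
    (r : ℝ) (hr : 0 < r) (s s' : ℝ) (hss : s' < s) (h : mBLim f univ s (3 * r) ≠ 0) :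
    ∃ a : ℝ, ∀ η > 0, ∀ N : ℕ, ∃ n ≥ N, ∃ E : Finset X, HamSep f n (2 * g n) r E ∧
      Real.exp (s' * n) ≤ E.card ∧
      ∀ x ∈ E, |(∑ i ∈ Finset.range n, φ (f^[i] x)) / n - a| < η := by
  classical
  by_contra hcon
  push Not at hcon
  choose η hη N hN using hcon
  obtain ⟨A, -, hA⟩ := (isCompact_Icc (a := -B) (b := B)).elim_nhds_subcover
    (fun a => Metric.ball a (η a)) (fun a _ => Metric.ball_mem_nhds a (hη a))
  obtain ⟨N1, hN1⟩ := hamming_many f hf g hg r hr s ((s + s') / 2) (by linarith) h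
  -- choose n large
  have ht : Tendsto (fun n : ℕ => Real.exp ((s - s') / 2 * n)) atTop atTop := by
    refine Real.tendsto_exp_atTop.comp ?_
    exact (tendsto_natCast_atTop_atTop).const_mul_atTop (by linarith)
  obtain ⟨n, hn1, hn2, hn3⟩ := ((ht.eventually_gt_atTop (A.card : ℝ)).and
    ((eventually_ge_atTop (max N1 1)).and (eventually_ge_atTop (A.sup N)))).exists
  have hn0 : 0 < n := by have := le_max_right N1 1; omega
  obtain ⟨E, hE, hEc⟩ := hN1 n ((le_max_left _ _).trans hn2)
  let b : X → ℝ := fun x => (∑ i ∈ Finset.range n, φ (f^[i] x)) / n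
  have hb : ∀ x, b x ∈ Icc (-B) B := by
    intro x
    rw [mem_Icc, ← abs_le]
    simp only [b]
    rw [abs_div, Nat.abs_cast, div_le_iff₀ (by exact_mod_cast hn0)]
    calc _ ≤ ∑ i ∈ Finset.range n, |φ (f^[i] x)| := Finset.abs_sum_le_sum_abs _ _
      _ ≤ ∑ i ∈ Finset.range n, B := Finset.sum_le_sum fun i _ => hB _
      _ = B * n := by simp [mul_comm]
  have hsub : E ⊆ A.biUnion fun a => E.filter fun x => |b x - a| < η a := by
    intro x hx
    have := hA (hb x)
    simp only [mem_iUnion, Metric.mem_ball, Real.dist_eq] at this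
    obtain ⟨a, ha, hxa⟩ := this
    simp only [Finset.mem_biUnion, Finset.mem_filter]
    exact ⟨a, ha, hx, hxa⟩
  have hlt : ∀ a ∈ A, ((E.filter fun x => |b x - a| < η a).card : ℝ) ≤ Real.exp (s' * n) := by
    intro a ha
    by_contra hc
    push Not at hc
    obtain ⟨x, hx, hx2⟩ := hN a n ((Finset.le_sup ha).trans hn3) (E.filter fun x => |b x - a| < η a)
      (fun x hx y hy => hE x (Finset.mem_filter.1 hx).1 y (Finset.mem_filter.1 hy).1) hc.le
    exact absurd (Finset.mem_filter.1 hx).2 (not_lt.2 hx2)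
  have hcard : (E.card : ℝ) ≤ A.card * Real.exp (s' * n) := by
    have h1 : (E.card : ℝ) ≤ ∑ a ∈ A, ((E.filter fun x => |b x - a| < η a).card : ℝ) := by
      exact_mod_cast (Finset.card_le_card hsub).trans Finset.card_biUnion_le
    refine h1.trans ((Finset.sum_le_sum hlt).trans ?_)
    simp
  have : Real.exp ((s + s') / 2 * n) = Real.exp ((s - s') / 2 * n) * Real.exp (s' * n) := by
    rw [← Real.exp_add]; congr 1; ring
  rw [this] at hEc
  have := mul_lt_mul_of_pos_right hn1 (Real.exp_pos (s' * n))
  linarith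


/-! ### Shadowing, Birkhoff averages and the mass distribution principle -/

lemma isClosed_blowupBall {X : Type*} [MetricSpace X] (f : X → X) (hf : Continuous f) (g : ℕ → ℕ)
    (x : X) (n : ℕ) (ε : ℝ) : IsClosed (blowupBall f g x n ε) := by
  classical
  have : blowupBall f g x n ε =
      ⋃ Λ ∈ (Finset.range n).powerset.filter (fun Λ => (Finset.range n \ Λ).card ≤ g n),
        ⋂ j ∈ Λ, {y | dist (f^[j] x) (f^[j] y) ≤ ε} := by
    ext y
    simp only [blowupBall, mem_ofPred_eq, mem_iUnion, mem_iInter, Finset.mem_filter,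
      Finset.mem_powerset, exists_prop, and_assoc]
    refine exists_congr fun Λ => and_congr Iff.rfl ?_
    constructor <;> rintro ⟨h1, h2⟩ <;> refine ⟨?_, h2⟩ <;> convert h1
  rw [this]
  refine isClosed_biUnion_finset fun Λ _ => isClosed_biInter fun j _ => ?_
  exact isClosed_le (continuous_const.dist (hf.iterate j)) continuous_const

lemma shadow_exists {X : Type*} [MetricSpace X] [CompactSpace X] (f : X → X) (hf : Continuous f)
    (g : ℕ → ℕ) (m : ℝ → ℕ)
    (hm : ∀ (k : ℕ) (x : ℕ → X) (ε : ℕ → ℝ) (n : ℕ → ℕ),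
      (∀ j < k, 0 < ε j) → (∀ j < k, m (ε j) ≤ n j) →
      (⋂ j ∈ Finset.range k,
        (f^[∑ i ∈ Finset.range j, n i] ⁻¹' blowupBall f g (x j) (n j) (ε j))).Nonempty)
    (x : ℕ → X) (δ : ℕ → ℝ) (l : ℕ → ℕ) (hδ : ∀ j, 0 < δ j) (hl : ∀ j, m (δ j) ≤ l j) :
    ∃ z, ∀ j, f^[∑ i ∈ Finset.range j, l i] z ∈ blowupBall f g (x j) (l j) (δ j) := by
  have hcl : ∀ k, IsClosed (⋂ j ∈ Finset.range k,
        (f^[∑ i ∈ Finset.range j, l i] ⁻¹' blowupBall f g (x j) (l j) (δ j))) := fun k =>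
    isClosed_biInter fun j _ => (isClosed_blowupBall f hf g _ _ _).preimage (hf.iterate _)
  obtain ⟨z, hz⟩ := IsCompact.nonempty_iInter_of_sequence_nonempty_isCompact_isClosed
    (fun k => ⋂ j ∈ Finset.range k,
        (f^[∑ i ∈ Finset.range j, l i] ⁻¹' blowupBall f g (x j) (l j) (δ j)))
    (fun k => biInter_subset_biInter_left fun j hj => by
      simp only [Finset.coe_range, mem_Iio] at hj ⊢
      omega)
    (fun k => hm k x δ l (fun j _ => hδ j) (fun j _ => hl j))
    (hcl 0).isCompact hcl
  refine ⟨z, fun j => ?_⟩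
  have := mem_iInter.1 hz (j + 1)
  simp only [mem_iInter, Finset.mem_range] at this
  exact this j (by omega)

lemma block_sum {X : Type*} [MetricSpace X] (f : X → X) (g : ℕ → ℕ) (φ : X → ℝ) (B : ℝ)
    (hB : ∀ x, |φ x| ≤ B) (δ κ : ℝ) (hκ0 : 0 ≤ κ) (hκ : ∀ p q, dist p q ≤ δ → |φ p - φ q| ≤ κ)
    (x z : X) (n : ℕ) (hz : z ∈ blowupBall f g x n δ) :
    |∑ i ∈ Finset.range n, φ (f^[i] z) - ∑ i ∈ Finset.range n, φ (f^[i] x)|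
      ≤ κ * n + 2 * B * g n := by
  classical
  obtain ⟨Λ, hΛ, hc, hd⟩ := hz
  have hB0 : 0 ≤ B := (abs_nonneg _).trans (hB x)
  have hc' : (Finset.range n \ Λ).card ≤ g n := by convert hc
  rw [← Finset.sum_sub_distrib, ← Finset.sum_sdiff hΛ]
  have h1 : |∑ i ∈ Finset.range n \ Λ, (φ (f^[i] z) - φ (f^[i] x))| ≤ 2 * B * g n := by
    calc _ ≤ ∑ i ∈ Finset.range n \ Λ, |φ (f^[i] z) - φ (f^[i] x)| := Finset.abs_sum_le_sum_abs _ _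
      _ ≤ ∑ i ∈ Finset.range n \ Λ, 2 * B := by
          refine Finset.sum_le_sum fun i _ => ?_
          have := abs_sub (φ (f^[i] z)) (φ (f^[i] x))
          have := hB (f^[i] z)
          have := hB (f^[i] x)
          linarith
      _ = 2 * B * ((Finset.range n \ Λ).card : ℝ) := by simp [mul_comm]
      _ ≤ _ := by gcongr
  have h2 : |∑ i ∈ Λ, (φ (f^[i] z) - φ (f^[i] x))| ≤ κ * n := by
    calc _ ≤ ∑ i ∈ Λ, |φ (f^[i] z) - φ (f^[i] x)| := Finset.abs_sum_le_sum_abs _ _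
      _ ≤ ∑ i ∈ Λ, κ := by
          refine Finset.sum_le_sum fun i hi => hκ _ _ ?_
          rw [dist_comm]; exact hd i hi
      _ = κ * (Λ.card : ℝ) := by simp [mul_comm]
      _ ≤ _ := by
          gcongr
          simpa using Finset.card_le_card hΛ
  have := abs_add_le (∑ i ∈ Finset.range n \ Λ, (φ (f^[i] z) - φ (f^[i] x)))
    (∑ i ∈ Λ, (φ (f^[i] z) - φ (f^[i] x)))
  linarith

lemma block_index (l : ℕ → ℕ) (hl : ∀ j, 1 ≤ l j) (n : ℕ) :
    ∃ k, ∑ i ∈ Finset.range k, l i ≤ n ∧ n < ∑ i ∈ Finset.range (k + 1), l i := by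
  have hj : ∀ j, j ≤ ∑ i ∈ Finset.range j, l i := fun j => by
    calc j = ∑ i ∈ Finset.range j, 1 := by simp
      _ ≤ _ := Finset.sum_le_sum fun i _ => hl i
  have hex : ∃ k, n < ∑ i ∈ Finset.range (k + 1), l i := ⟨n, by have := hj (n + 1); omega⟩
  refine ⟨Nat.find hex, ?_, Nat.find_spec hex⟩
  rcases Nat.eq_zero_or_pos (Nat.find hex) with h | h
  · rw [h]; simp
  · have := Nat.find_min hex (m := Nat.find hex - 1) (by omega)
    rw [Nat.sub_add_cancel h] at this
    omega

lemma block_average (u : ℕ → ℝ) (B : ℝ) (hu : ∀ i, |u i| ≤ B) (l : ℕ → ℕ) (hl : ∀ j, 1 ≤ l j)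
    (e : ℕ → ℝ) (he : Tendsto e atTop (𝓝 0))
    (hlM : ∀ η > 0, ∀ᶠ j in atTop, (l j : ℝ) ≤ η * (∑ i ∈ Finset.range j, l i : ℕ))
    (hblock : ∀ j, |∑ i ∈ Finset.range (l j), u (∑ i ∈ Finset.range j, l i + i)| ≤ e j * l j) :
    Tendsto (fun n : ℕ => (∑ i ∈ Finset.range n, u i) / n) atTop (𝓝 0) := by
  have hB0 : 0 ≤ B := (abs_nonneg _).trans (hu 0)
  set M : ℕ → ℕ := fun j => ∑ i ∈ Finset.range j, l i with hM
  have hMs : ∀ j, M (j + 1) = M j + l j := fun j => Finset.sum_range_succ _ _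
  have hMmono : Monotone M := monotone_nat_of_le_succ fun j => by rw [hMs]; omega
  have hMj : ∀ j, j ≤ M j := fun j => by
    calc j = ∑ i ∈ Finset.range j, 1 := by simp
      _ ≤ _ := Finset.sum_le_sum fun i _ => hl i
  have hS : ∀ a n, |∑ i ∈ Finset.range n, u (a + i)| ≤ B * n := fun a n => by
    calc _ ≤ ∑ i ∈ Finset.range n, |u (a + i)| := Finset.abs_sum_le_sum_abs _ _
      _ ≤ ∑ i ∈ Finset.range n, B := Finset.sum_le_sum fun i _ => hu _
      _ = B * n := by simp [mul_comm]
  rw [Metric.tendsto_atTop]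
  intro η hη
  set ζ := η / (2 * (1 + B)) with hζ
  have hζ0 : 0 < ζ := by positivity
  obtain ⟨J, hJ⟩ := eventually_atTop.1 ((he.eventually_lt_const hζ0).and (hlM ζ hζ0))
  have hind : ∀ k ≥ J, |∑ i ∈ Finset.range (M k), u i| ≤ B * M J + ζ * M k := by
    intro k hk
    induction k, hk using Nat.le_induction with
    | base =>
      have := hS 0 (M J)
      simp only [zero_add] at this
      have : 0 ≤ ζ * M J := by positivity
      linarith
    | succ k hk ih =>
      rw [hMs, Finset.sum_range_add]
      have h1 := hblock k
      have h2 := (hJ k hk).1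
      have h3 : e k * l k ≤ ζ * l k := by gcongr
      have h4 := abs_add_le (∑ i ∈ Finset.range (M k), u i) (∑ i ∈ Finset.range (l k), u (M k + i))
      push_cast
      linarith
  obtain ⟨N, hN⟩ := exists_nat_gt (2 * B * M J / η)
  refine ⟨max (M J) (max N 1), fun n hn => ?_⟩
  have hn1 : M J ≤ n := (le_max_left _ _).trans hn
  have hn2 : N ≤ n := (le_max_left _ _).trans ((le_max_right _ _).trans hn)
  have hn3 : 1 ≤ n := (le_max_right _ _).trans ((le_max_right _ _).trans hn)
  have hn0 : (0:ℝ) < n := by exact_mod_cast hn3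
  obtain ⟨k, hk1, hk2⟩ := block_index l hl n
  have hkJ : J ≤ k := by
    by_contra hc
    have : M (k + 1) ≤ M J := hMmono (by omega)
    exact absurd (lt_of_lt_of_le hk2 this) (by omega)
  change M k ≤ n at hk1
  change n < M (k + 1) at hk2
  rw [Real.dist_eq, sub_zero, abs_div, Nat.abs_cast, div_lt_iff₀ hn0]
  obtain ⟨q, rfl⟩ := Nat.exists_eq_add_of_le hk1
  have hq : q ≤ l k := by rw [hMs] at hk2; omega
  rw [Finset.sum_range_add]
  have h4 := abs_add_le (∑ i ∈ Finset.range (M k), u i) (∑ i ∈ Finset.range q, u (M k + i))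
  have h5 := hS (M k) q
  have h6 := hind k hkJ
  have h7 := (hJ k hkJ).2
  have h8 : B * q ≤ B * (ζ * M k) := by
    have : (q:ℝ) ≤ l k := by exact_mod_cast hq
    gcongr
    exact this.trans h7
  have h9 : (M k : ℝ) ≤ ((M k + q : ℕ) : ℝ) := by exact_mod_cast hk1
  have h10 : 2 * B * M J < η * ((M k + q : ℕ) : ℝ) := by
    have : (N:ℝ) ≤ ((M k + q : ℕ) : ℝ) := by exact_mod_cast hn2
    rw [div_lt_iff₀ hη] at hN
    nlinarith
  have h11 : ζ * (1 + B) * M k ≤ η / 2 * ((M k + q : ℕ) : ℝ) := by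
    have : ζ * (1 + B) = η / 2 := by rw [hζ]; field_simp
    rw [this]; gcongr
  nlinarith

lemma mass_bound {A : ℕ → Type*} [∀ j, Fintype (A j)] [∀ j, Nonempty (A j)]
    {ι : Type*} [Countable ι] (k : ι → ℕ)
    (S : ι → Set (∀ j, A j)) (hS : ∀ p, ∀ ω ∈ S p, ∀ ω' ∈ S p, ∀ j < k p, ω j = ω' j)
    (hcov : ∀ ω, ∃ p, ω ∈ S p) (w : ι → ℝ≥0∞)
    (hw : ∀ p, (S p).Nonempty → ∏ j ∈ Finset.range (k p), (Fintype.card (A j) : ℝ≥0∞)⁻¹ ≤ w p) :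
    1 ≤ ∑' p, w p := by
  classical
  letI : ∀ j, MeasurableSpace (A j) := fun j => ⊤
  let ν : ∀ j, Measure (A j) := fun j => ProbabilityTheory.uniformOn univ
  have hν : ∀ j, IsProbabilityMeasure (ν j) := fun j =>
    ProbabilityTheory.isProbabilityMeasure_uniformOn finite_univ univ_nonempty
  let μ := Measure.infinitePi ν
  have h1 : ∀ p, μ (S p) ≤ w p := by
    intro p
    rcases (S p).eq_empty_or_nonempty with h | ⟨ω, hω⟩
    · simp [h]
    · refine le_trans ?_ (hw p ⟨ω, hω⟩)
      have hsub : S p ⊆ Set.pi (Finset.range (k p) : Set ℕ) fun j => {ω j} := by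
        intro ω' hω' j hj
        simp only [mem_singleton_iff]
        exact hS p ω' hω' ω hω j (by simpa using hj)
      refine (measure_mono hsub).trans ?_
      rw [Measure.infinitePi_pi _ (fun i _ => MeasurableSpace.measurableSet_top)]
      refine Finset.prod_le_prod' fun j _ => ?_
      simp only [ν]
      rw [ProbabilityTheory.uniformOn_univ]
      simp [Measure.count_singleton' (show MeasurableSet {ω j} from MeasurableSpace.measurableSet_top)]
  calc (1:ℝ≥0∞) = μ univ := by simp [μ]
    _ ≤ μ (⋃ p, S p) := measure_mono fun ω _ => mem_iUnion.2 (hcov ω)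
    _ ≤ ∑' p, μ (S p) := measure_iUnion_le _
    _ ≤ _ := ENNReal.tsum_le_tsum h1

/-- A Birkhoff limit is the integral of an invariant measure. -/
lemma limit_mem {X : Type*} [MetricSpace X] [CompactSpace X] [Nonempty X]
    [MeasurableSpace X] [BorelSpace X] (f : X → X) (hf : Continuous f)
    (φ : X → ℝ) (hφ : Continuous φ) (a : ℝ) (x : X) (hx : x ∈ Rphi f φ a) :
    ∃ μ ∈ invSet f, intPhi φ μ = a := by
  obtain ⟨μ, hμ⟩ := exists_clusterPt_of_compactSpace (map (empProb f x) atTop)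
  have hemp : ∀ (ψ : BoundedContinuousFunction X ℝ) (n : ℕ), 1 ≤ n → 
      ∫ y, ψ y ∂(empProb f x n : Measure X) = (∑ i ∈ Finset.range n, ψ (f^[i] x)) / n := by
    intro ψ n hn
    change ∫ y, ψ y ∂(empMeasure f x n) = _
    rw [empMeasure, max_eq_left hn, integral_smul_measure, integral_finsetSum_measure]
    · simp [div_eq_inv_mul]
    · intro i _; exact ψ.integrable _
  have hlim : ∀ (ψ : BoundedContinuousFunction X ℝ) (b : ℝ),
      Tendsto (fun n : ℕ => (∑ i ∈ Finset.range n, ψ (f^[i] x)) / n) atTop (𝓝 b) →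
      ∫ y, ψ y ∂(μ : Measure X) = b := by
    intro ψ b hb
    have hc : Continuous (fun ν : ProbabilityMeasure X => ∫ y, ψ y ∂(ν : Measure X)) := by
      rw [continuous_iff_continuousAt]
      intro ν
      exact ProbabilityMeasure.tendsto_iff_forall_integral_tendsto.1 tendsto_id ψ
    have h1 : MapClusterPt μ atTop (empProb f x) := hμ
    have h2 := h1.continuousAt_comp hc.continuousAt
    have h3 : Tendsto ((fun ν : ProbabilityMeasure X => ∫ y, ψ y ∂(ν : Measure X)) ∘ empProb f x)
        atTop (𝓝 b) := by
      refine hb.congr' ?_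
      filter_upwards [eventually_ge_atTop 1] with n hn
      exact (hemp ψ n hn).symm
    have h4 : ClusterPt _ (𝓝 b) := ClusterPt.mono h2 h3
    exact eq_of_nhds_neBot h4
  refine ⟨μ, ?_, ?_⟩
  · change Measure.map f (μ : Measure X) = μ
    haveI : IsProbabilityMeasure (Measure.map f (μ : Measure X)) :=
      Measure.isProbabilityMeasure_map hf.measurable.aemeasurable
    refine ext_of_forall_integral_eq_of_IsFiniteMeasure fun ψ => ?_
    rw [integral_map hf.measurable.aemeasurable ψ.continuous.aestronglyMeasurable]
    let χ : BoundedContinuousFunction X ℝ := ψ.compContinuous ⟨f, hf⟩ - ψ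
    have h0 : ∫ y, χ y ∂(μ : Measure X) = 0 := by
      refine hlim χ 0 ?_
      have h1 : ∀ n : ℕ, ∑ i ∈ Finset.range n, χ (f^[i] x) = ψ (f^[n] x) - ψ x := by
        intro n
        have := Finset.sum_range_sub (fun i => ψ (f^[i] x)) n
        simp only [Function.iterate_zero, id] at this
        rw [← this]
        refine Finset.sum_congr rfl fun i _ => ?_
        simp [χ, Function.iterate_succ_apply']
      simp_rw [h1]
      refine squeeze_zero_norm (a := fun n : ℕ => (2 * ‖ψ‖) / (n:ℝ)) (fun n => ?_)
        (tendsto_const_div_atTop_nhds_zero_nat _)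
      rw [norm_div, Real.norm_natCast]
      gcongr
      have := norm_sub_le (ψ (f^[n] x)) (ψ x)
      have := ψ.norm_coe_le_norm (f^[n] x)
      have := ψ.norm_coe_le_norm x
      linarith
    have h2 : ∫ y, χ y ∂(μ : Measure X) = ∫ y, ψ (f y) ∂(μ : Measure X) - ∫ y, ψ y ∂(μ : Measure X) := by
      rw [← integral_sub]
      · rfl
      · exact (ψ.compContinuous ⟨f, hf⟩).integrable _
      · exact ψ.integrable _
    linarith
  · exact hlim (BoundedContinuousFunction.mkOfCompact ⟨φ, hφ⟩) a hx

lemma limit_mem_Icc {X : Type*} [MetricSpace X] [CompactSpace X] [Nonempty X]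
    [MeasurableSpace X] [BorelSpace X] (f : X → X) (hf : Continuous f)
    (φ : X → ℝ) (hφ : Continuous φ) (B : ℝ) (hB : ∀ x, |φ x| ≤ B) (a : ℝ) (x : X)
    (hx : x ∈ Rphi f φ a) :
    a ∈ Icc (sInf (intPhi φ '' invSet f)) (sSup (intPhi φ '' invSet f)) := by
  obtain ⟨μ, hμ, rfl⟩ := limit_mem f hf φ hφ a x hx
  have hb : ∀ ν : ProbabilityMeasure X, |intPhi φ ν| ≤ B := by
    intro ν
    have := norm_integral_le_of_norm_le_const (μ := (ν : Measure X)) (f := φ) (C := B)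
      (Eventually.of_forall hB)
    simpa [intPhi] using this
  refine ⟨csInf_le ⟨-B, ?_⟩ (mem_image_of_mem _ hμ), le_csSup ⟨B, ?_⟩ (mem_image_of_mem _ hμ)⟩
  · rintro _ ⟨ν, _, rfl⟩; exact (abs_le.1 (hb ν)).1
  · rintro _ ⟨ν, _, rfl⟩; exact (abs_le.1 (hb ν)).2


/-! ### The Moran construction -/

lemma sep_unique {X : Type*} [MetricSpace X] (f : X → X) (g : ℕ → ℕ) (E : Finset X) (l n M : ℕ)
    (ε δ : ℝ) (hδ : δ ≤ ε) (hE : HamSep f l (2 * g l) (4 * ε) E) (p q : X) (hp : p ∈ E) (hq : q ∈ E)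
    (y y' z : X) (hy : f^[M] y ∈ blowupBall f g p l δ) (hy' : f^[M] y' ∈ blowupBall f g q l δ)
    (hyz : y ∈ bowenBall f z n ε) (hyz' : y' ∈ bowenBall f z n ε) (hn : M + l ≤ n) : p = q := by
  classical
  by_contra hne
  have h1 := hE p hp q hq hne
  obtain ⟨Λ, hΛ, hc, hd⟩ := hy
  obtain ⟨Λ', hΛ', hc', hd'⟩ := hy'
  have hc1 : (Finset.range l \ Λ).card ≤ g l := by convert hc
  have hc2 : (Finset.range l \ Λ').card ≤ g l := by convert hc'
  have hsub : ((Finset.range l).filter fun i => 4 * ε ≤ dist (f^[i] p) (f^[i] q)) ⊆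
      (Finset.range l \ Λ) ∪ (Finset.range l \ Λ') := by
    intro i hi
    rw [Finset.mem_filter] at hi
    by_contra hcon
    simp only [Finset.mem_union, Finset.mem_sdiff, hi.1, true_and, not_or, not_not] at hcon
    have a1 := hd i hcon.1
    have a2 := hd' i hcon.2
    have hi' := Finset.mem_range.1 hi.1
    have a3 := hyz (i + M) (by omega)
    have a4 := hyz' (i + M) (by omega)
    rw [Function.iterate_add_apply f i M y] at a3
    rw [Function.iterate_add_apply f i M y'] at a4
    have b1 := dist_triangle4 (f^[i] p) (f^[i] (f^[M] y)) (f^[i] (f^[M] y')) (f^[i] q)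
    have b2 := dist_triangle_left (f^[i] (f^[M] y)) (f^[i] (f^[M] y')) (f^[i + M] z)
    rw [dist_comm (f^[i] (f^[M] y')) (f^[i] q)] at b1
    linarith [hi.2]
  have h2 := (Finset.card_le_card hsub).trans (Finset.card_union_le _ _)
  have h3 : hamCount f l (4 * ε) p q =
      ((Finset.range l).filter fun i => 4 * ε ≤ dist (f^[i] p) (f^[i] q)).card := by
    unfold hamCount; congr
  omega

lemma slow_index (n : ℕ → ℕ) : ∃ κ : ℕ → ℕ, Tendsto κ atTop atTop ∧ ∀ j, κ j * n (κ j) ≤ j := by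
  refine ⟨fun j => Nat.findGreatest (fun k => k * n k ≤ j) j, ?_, ?_⟩
  · refine tendsto_atTop.2 fun K => ?_
    filter_upwards [eventually_ge_atTop (max K (K * n K))] with j hj
    exact Nat.le_findGreatest ((le_max_left _ _).trans hj) ((le_max_right _ _).trans hj)
  · intro j
    exact Nat.findGreatest_spec (P := fun k => k * n k ≤ j) (m := 0) (Nat.zero_le _) (by simp)

lemma core {X : Type*} [MetricSpace X] [CompactSpace X] [Nonempty X]
    (f : X → X) (hf : Continuous f) (g : ℕ → ℕ) (hg : IsBlowup g)
    (hgap : GAlmostProduct f g) (φ : X → ℝ) (hφ : Continuous φ) (B : ℝ) (hB : ∀ x, |φ x| ≤ B)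
    (ε : ℝ) (hε : 0 < ε) (s t : ℝ) (hst : t < s) (h : mBLim f univ s (12 * ε) ≠ 0) :
    ∃ a : ℝ, ∃ N : ℕ, ∀ C : Set (X × ℕ), C.Countable → (∀ p ∈ C, N ≤ p.2) →
      (Rphi f φ a ⊆ ⋃ p ∈ C, bowenBall f p.1 p.2 ε) → 1 ≤ coverSum t C := by
  classical
  obtain ⟨m, -, hm⟩ := hgap
  obtain ⟨s', hts', hs's⟩ := exists_between hst
  have hB0 : 0 ≤ B := (abs_nonneg _).trans (hB (Classical.arbitrary X))
  obtain ⟨a, ha⟩ := hamming_pigeon f hf g hg φ B hB (4 * ε) (by positivity) s s' hs's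
    (by convert h using 2; ring)
  -- stage data
  have hδ : ∀ k : ℕ, ∃ δ : ℝ, 0 < δ ∧ δ ≤ ε ∧
      ∀ p q, dist p q ≤ δ → |φ p - φ q| ≤ 1 / ((k:ℝ) + 1) := by
    intro k
    obtain ⟨δ, hδ, hδ'⟩ := Metric.uniformContinuous_iff.1
      (CompactSpace.uniformContinuous_of_continuous hφ) (1 / ((k:ℝ) + 1)) (by positivity)
    refine ⟨min (δ / 2) ε, by positivity, min_le_right _ _, fun p q hpq => ?_⟩
    have : dist p q < δ := lt_of_le_of_lt (hpq.trans (min_le_left _ _)) (by linarith)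
    have := hδ' this
    rw [Real.dist_eq] at this
    exact this.le
  choose δ hδ0 hδε hδφ using hδ
  have hstage : ∀ k : ℕ, ∃ n : ℕ, 1 ≤ n ∧ m (δ k) ≤ n ∧ (g n : ℝ) ≤ 1 / ((k:ℝ) + 1) * n ∧
      ∃ E : Finset X, HamSep f n (2 * g n) (4 * ε) E ∧ Real.exp (s' * n) ≤ E.card ∧
      ∀ x ∈ E, |(∑ i ∈ Finset.range n, φ (f^[i] x)) - a * n| ≤ 1 / ((k:ℝ) + 1) * n := by
    intro k
    obtain ⟨N, hN⟩ := eventually_atTop.1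
      (hg.ratio_tendsto_zero.eventually_lt_const (show (0:ℝ) < 1 / ((k:ℝ) + 1) by positivity))
    obtain ⟨n, hn, E, hE1, hE2, hE3⟩ := ha (1 / ((k:ℝ) + 1)) (by positivity) (max N (max 1 (m (δ k))))
    have hn1 : 1 ≤ n := (le_max_left _ _).trans ((le_max_right _ _).trans hn)
    have hn0 : (0:ℝ) < n := by exact_mod_cast hn1
    refine ⟨n, hn1, (le_max_right _ _).trans ((le_max_right _ _).trans hn), ?_, E, hE1, hE2, ?_⟩
    · have := hN n ((le_max_left _ _).trans hn)
      rw [div_lt_iff₀ hn0] at this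
      exact this.le
    · intro x hx
      have := (hE3 x hx).le
      have h2 : (∑ i ∈ Finset.range n, φ (f^[i] x)) - a * n =
        ((∑ i ∈ Finset.range n, φ (f^[i] x)) / n - a) * n := by field_simp
      rw [h2, abs_mul, Nat.abs_cast]
      gcongr
  choose n hn1 hnm hng E hEsep hEcard hEavg using hstage
  obtain ⟨κ, hκ, hκn⟩ := slow_index n
  let l : ℕ → ℕ := fun j => n (κ j)
  let M : ℕ → ℕ := fun j => ∑ i ∈ Finset.range j, l i
  have hl1 : ∀ j, 1 ≤ l j := fun j => hn1 _
  have hMs : ∀ j, M (j + 1) = M j + l j := fun j => Finset.sum_range_succ _ _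
  have hMmono : Monotone M := monotone_nat_of_le_succ fun j => by rw [hMs]; omega
  have hMj : ∀ j, j ≤ M j := fun j => by
    calc j = ∑ i ∈ Finset.range j, 1 := by simp
      _ ≤ _ := Finset.sum_le_sum fun i _ => hl1 i
  have hκinv : Tendsto (fun j => 1 / ((κ j : ℝ) + 1)) atTop (𝓝 0) :=
    tendsto_one_div_add_atTop_nhds_zero_nat.comp hκ
  have hlM : ∀ η > 0, ∀ᶠ j in atTop, (l j : ℝ) ≤ η * (M j : ℕ) := by
    intro η hη
    obtain ⟨K, hK⟩ := exists_nat_gt (1 / η)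
    filter_upwards [hκ.eventually_ge_atTop K] with j hj
    have h1 : κ j * l j ≤ M j := (hκn j).trans (hMj j)
    have h2 : (κ j : ℝ) * l j ≤ M j := by exact_mod_cast h1
    have h3 : (K:ℝ) ≤ κ j := by exact_mod_cast hj
    rw [div_lt_iff₀ hη] at hK
    have h4 : (1:ℝ) ≤ κ j * η := by nlinarith
    calc (l j : ℝ) = 1 * l j := by ring
      _ ≤ (κ j * η) * l j := by gcongr
      _ = η * (κ j * l j) := by ring
      _ ≤ _ := by gcongr
  let A : ℕ → Type _ := fun j => (E (κ j) : Finset X)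
  have hEne : ∀ k, (E k).Nonempty := by
    intro k
    rw [← Finset.card_pos]
    have := (Real.exp_pos _).trans_le (hEcard k)
    exact_mod_cast this
  haveI : ∀ j, Fintype (A j) := fun j => inferInstanceAs (Fintype (E (κ j) : Finset X))
  haveI : ∀ j, Nonempty (A j) := fun j => (hEne (κ j)).to_subtype
  -- shadowing points
  have hz : ∀ ω : ∀ j, A j, ∃ z, ∀ j, f^[M j] z ∈ blowupBall f g (ω j).1 (l j) (δ (κ j)) := fun ω =>
    shadow_exists f hf g m hm (fun j => (ω j).1) (fun j => δ (κ j)) l (fun j => hδ0 _)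
      (fun j => hnm _)
  choose Z hZ using hz
  -- Birkhoff averages
  have hZR : ∀ ω, Z ω ∈ Rphi f φ a := by
    intro ω
    have key := block_average (fun i => φ (f^[i] (Z ω)) - a) (B + |a|)
      (fun i => (abs_sub _ _).trans (by have := hB (f^[i] (Z ω)); linarith)) l hl1
      (fun j => (2 + 2 * B) * (1 / ((κ j : ℝ) + 1))) (by simpa using hκinv.const_mul (2 + 2 * B))
      hlM ?_
    · have h2 := key.add_const a
      rw [zero_add] at h2
      refine h2.congr' ?_
      filter_upwards [eventually_ge_atTop 1] with k hk
      have hk0 : (k:ℝ) ≠ 0 := by positivity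
      rw [Finset.sum_sub_distrib]
      simp only [Finset.sum_const, Finset.card_range, nsmul_eq_mul]
      field_simp
      ring
    · intro j
      have h1 := block_sum f g φ B hB (δ (κ j)) (1 / ((κ j : ℝ) + 1)) (by positivity) (hδφ _) _ _ _
        (hZ ω j)
      have h2 := hEavg (κ j) (ω j).1 (ω j).2
      have h3 : 2 * B * (g (n (κ j)) : ℝ) ≤ 2 * B * (1 / ((κ j : ℝ) + 1) * n (κ j)) := by
        gcongr; exact hng (κ j)
      have h4 : ∑ i ∈ Finset.range (l j), (φ (f^[M j + i] (Z ω)) - a) =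
          (∑ i ∈ Finset.range (l j), φ (f^[i] (f^[M j] (Z ω)))
            - ∑ i ∈ Finset.range (l j), φ (f^[i] (ω j).1)) +
          (∑ i ∈ Finset.range (l j), φ (f^[i] (ω j).1) - a * l j) := by
        rw [Finset.sum_sub_distrib]
        simp only [Finset.sum_const, Finset.card_range, nsmul_eq_mul, ← Function.iterate_add_apply]
        simp only [add_comm (M j)]
        ring
      change |∑ i ∈ Finset.range (l j), (φ (f^[M j + i] (Z ω)) - a)| ≤ _
      rw [h4]
      refine (abs_add_le _ _).trans ?_
      have h5 := add_le_add h1 h2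
      refine h5.trans ?_
      simp only [l] at h3 ⊢
      linarith
  -- the mass distribution principle
  obtain ⟨J, hJ⟩ := eventually_atTop.1 (hlM ((s' - t) / (|t| + 1))
    (div_pos (by linarith) (by positivity)))
  refine ⟨a, M J, fun C hC hCN hcov => ?_⟩
  haveI : Countable C := hC.to_subtype
  have hk : ∀ p : C, ∃ k, M k ≤ p.1.2 ∧ p.1.2 < M (k + 1) := fun p => block_index l hl1 p.1.2
  choose k hk1 hk2 using hk
  refine mass_bound (A := A) k (fun p => {ω | Z ω ∈ bowenBall f p.1.1 p.1.2 ε}) ?_ ?_ _ ?_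
  · intro p ω hω ω' hω' j hj
    refine Subtype.ext ?_
    refine sep_unique f g (E (κ j)) (l j) p.1.2 (M j) ε (δ (κ j)) (hδε _) (hEsep _) _ _ (ω j).2
      (ω' j).2 (Z ω) (Z ω') p.1.1 (hZ ω j) (hZ ω' j) hω hω' ?_
    rw [← hMs]
    exact (hMmono hj).trans (hk1 p)
  · intro ω
    obtain ⟨p, hp, hpω⟩ := mem_iUnion₂.1 (hcov (hZR ω))
    exact ⟨⟨p, hp⟩, hpω⟩
  · intro p _
    have hkJ : J ≤ k p := by
      by_contra hc
      have h1 : M (k p + 1) ≤ M J := hMmono (by omega)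
      have := hCN p.1 p.2
      have := hk2 p
      omega
    have h1 : ∀ K, ∏ j ∈ Finset.range K, (Fintype.card (A j) : ℝ≥0∞)⁻¹ ≤
        ENNReal.ofReal (Real.exp (-s' * M K)) := by
      intro K
      induction K with
      | zero => simp [M]
      | succ K ih =>
        rw [Finset.prod_range_succ, hMs]
        have h3 : Real.exp (-s' * ((M K + l K : ℕ) : ℝ)) =
            Real.exp (-s' * M K) * Real.exp (-s' * l K) := by
          rw [← Real.exp_add]; congr 1; push_cast; ring
        rw [h3, ENNReal.ofReal_mul (Real.exp_pos _).le]
        refine mul_le_mul' ih ?_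
        have h4 : (Fintype.card (A K) : ℝ) = (E (κ K)).card := by
          have : Fintype.card (A K) = (E (κ K)).card := by
            rw [← Fintype.card_coe (E (κ K))]
          exact_mod_cast this
        have h5 : Real.exp (s' * l K) ≤ (Fintype.card (A K) : ℝ) := by
          rw [h4]; exact hEcard (κ K)
        have h6 : -s' * (l K : ℝ) = -(s' * l K) := by ring
        rw [h6, Real.exp_neg, ENNReal.ofReal_inv_of_pos (Real.exp_pos _), ENNReal.inv_le_inv,
          ← ENNReal.ofReal_natCast]
        exact ENNReal.ofReal_le_ofReal h5
    refine (h1 (k p)).trans (ENNReal.ofReal_le_ofReal (Real.exp_le_exp.2 ?_))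
    have h7 := hJ (k p) hkJ
    have h8 : |t| * (l (k p) : ℝ) ≤ (s' - t) * M (k p) := by
      rw [div_mul_eq_mul_div, le_div_iff₀ (by positivity)] at h7
      have : (0:ℝ) ≤ l (k p) := by positivity
      linarith
    obtain ⟨q, hq⟩ := Nat.exists_eq_add_of_le (hk1 p)
    have hq2 : q ≤ l (k p) := by
      have := hk2 p
      rw [hMs] at this; omega
    have hq3 : (q:ℝ) ≤ l (k p) := by exact_mod_cast hq2
    have h9 : t * q ≤ |t| * l (k p) :=
      mul_le_mul (le_abs_self t) hq3 (by positivity) (abs_nonneg t)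
    rw [hq]
    push_cast
    linarith

/-! ### Comparison of entropies and conclusion -/

lemma core_union {X : Type*} [MetricSpace X] [CompactSpace X] [Nonempty X]
    [MeasurableSpace X] [BorelSpace X]
    (f : X → X) (hf : Continuous f) (g : ℕ → ℕ) (hg : IsBlowup g)
    (hgap : GAlmostProduct f g) (φ : X → ℝ) (hφ : Continuous φ)
    (ε : ℝ) (hε : 0 < ε) (s t : ℝ) (hst : t < s) (h : mBLim f univ s (12 * ε) ≠ 0) :
    mBLim f (⋃ a ∈ Set.Icc (sInf (intPhi φ '' invSet f)) (sSup (intPhi φ '' invSet f)),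
        Rphi f φ a) t ε ≠ 0 := by
  obtain ⟨B, hB⟩ : ∃ B, ∀ x, |φ x| ≤ B := by
    obtain ⟨B, hB⟩ := isCompact_univ.exists_bound_of_continuousOn hφ.continuousOn
    exact ⟨B, fun x => hB x (mem_univ x)⟩
  obtain ⟨a, N, hN⟩ := core f hf g hg hgap φ hφ B hB ε hε s t hst h
  have hne : (Rphi f φ a).Nonempty := by
    by_contra hc
    rw [not_nonempty_iff_eq_empty] at hc
    have := hN ∅ countable_empty (by simp) (by simp [hc])
    simp [coverSum] at this
  obtain ⟨x, hx⟩ := hne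
  have haI := limit_mem_Icc f hf φ hφ B hB a x hx
  have h1 : 1 ≤ mB f (⋃ a ∈ Set.Icc (sInf (intPhi φ '' invSet f)) (sSup (intPhi φ '' invSet f)),
        Rphi f φ a) t N ε := by
    refine le_iInf fun C => le_iInf fun h1 => le_iInf fun h2 => le_iInf fun h3 => ?_
    exact hN C h1 h2 ((subset_biUnion_of_mem (u := fun a => Rphi f φ a) haI).trans h3)
  have h2 := h1.trans (le_iSup (fun N => mB f (⋃ a ∈ Set.Icc (sInf (intPhi φ '' invSet f))
    (sSup (intPhi φ '' invSet f)), Rphi f φ a) t N ε) N)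
  intro h0
  rw [mBLim] at h0
  rw [h0] at h2
  simp at h2

lemma hB_compare {X : Type*} [MetricSpace X] [CompactSpace X] [Nonempty X]
    (f : X → X) (Z : Set X)
    (hZ : ∀ ε : ℝ, 0 < ε → ∀ s t : ℝ, t < s → mBLim f univ s (12 * ε) ≠ 0 → mBLim f Z t ε ≠ 0)
    (ε : ℝ) (hε : 0 < ε) :
    0 ≤ hB f univ ε ∧ hB f Z ε ≤ hB f univ ε ∧ hB f univ (12 * ε) ≤ hB f Z ε := by
  have hpos : ∀ ε : ℝ, ∀ t ∈ {s : ℝ | mBLim f univ s ε = 0}, 0 ≤ t := by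
    intro ε t ht
    by_contra hc
    exact neg_not_mem f t (not_le.1 hc) ε ht
  have hsub : {s : ℝ | mBLim f univ s ε = 0} ⊆ {s : ℝ | mBLim f Z s ε = 0} := by
    intro s hs
    have := mB_mono_set f Z univ (subset_univ _) s ε
    rw [mem_ofPred_eq] at hs ⊢
    rw [hs] at this
    simpa using this
  have hlow : ∀ t ∈ {s : ℝ | mBLim f Z s ε = 0}, hB f univ (12 * ε) ≤ t := by
    intro t ht
    by_contra hc
    obtain ⟨s, hs1, hs2⟩ := exists_between (not_le.1 hc)
    refine hZ ε hε s t hs1 (fun h0 => ?_) ht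
    have : hB f univ (12 * ε) ≤ s := csInf_le ⟨0, hpos (12 * ε)⟩ h0
    linarith
  have hne : {s : ℝ | mBLim f univ s ε = 0}.Nonempty := exists_mem_univ f ε hε
  exact ⟨le_csInf hne (hpos ε), csInf_le_csInf ⟨_, hlow⟩ hne hsub, le_csInf (hne.mono hsub) hlow⟩

lemma mdim_eq {X : Type*} [MetricSpace X] [CompactSpace X] [Nonempty X]
    (f : X → X) (Z : Set X)
    (hZ : ∀ ε : ℝ, 0 < ε → 0 ≤ hB f univ ε ∧ hB f Z ε ≤ hB f univ ε ∧
      hB f univ (12 * ε) ≤ hB f Z ε) :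
    mdimUpper f univ = mdimUpper f Z := by
  unfold mdimUpper
  rw [limsup_eq, limsup_eq]
  have hZ0 : ∀ ε : ℝ, 0 < ε → 0 ≤ hB f Z ε := fun ε hε =>
    (hZ (12 * ε) (by positivity)).1.trans (hZ ε hε).2.2
  set U := {b : ℝ | ∀ᶠ ε in 𝓝[>] (0:ℝ), hB f univ ε / |Real.log ε| ≤ b} with hU
  set V := {b : ℝ | ∀ᶠ ε in 𝓝[>] (0:ℝ), hB f Z ε / |Real.log ε| ≤ b} with hV
  have hUV : U ⊆ V := by
    intro b hb
    rw [hU, mem_ofPred_eq] at hb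
    rw [hV, mem_ofPred_eq]
    filter_upwards [hb, self_mem_nhdsWithin] with ε h1 h2
    refine le_trans ?_ h1
    gcongr
    exact (hZ ε h2).2.1
  have hV0 : ∀ b ∈ V, 0 ≤ b := by
    intro b hb
    rw [hV, mem_ofPred_eq] at hb
    obtain ⟨ε, h1, h2⟩ := (hb.and self_mem_nhdsWithin).exists
    exact le_trans (div_nonneg (hZ0 ε h2) (abs_nonneg _)) h1
  have hVU : ∀ b ∈ V, ∀ γ > 0, b + γ ∈ U := by
    intro b hb γ hγ
    have hb0 := hV0 b hb
    rw [hV, mem_ofPred_eq] at hb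
    rw [hU, mem_ofPred_eq]
    -- change of scale
    have ht : Tendsto (fun ε : ℝ => ε / 12) (𝓝[>] 0) (𝓝[>] 0) := by
      refine tendsto_nhdsWithin_iff.2 ⟨?_, ?_⟩
      · have : Tendsto (fun ε : ℝ => ε / 12) (𝓝 0) (𝓝 (0 / 12)) := tendsto_id.div_const 12
        rw [zero_div] at this
        exact this.mono_left nhdsWithin_le_nhds
      · filter_upwards [self_mem_nhdsWithin] with ε h2
        have : (0:ℝ) < ε := h2
        exact mem_Ioi.2 (by positivity)
    have hlog : ∀ᶠ ε in 𝓝[>] (0:ℝ), Real.log ε < -(b * Real.log 12 / γ + 1) :=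
      Real.tendsto_log_nhdsGT_zero.eventually_lt_atBot _
    filter_upwards [ht.eventually hb, hlog, self_mem_nhdsWithin] with ε h1 h2 h3
    have hε : (0:ℝ) < ε := h3
    have hl12 : 0 < Real.log 12 := Real.log_pos (by norm_num)
    have hq : 0 ≤ b * Real.log 12 / γ := by positivity
    have hneg : Real.log ε < 0 := by linarith
    have hl : Real.log (ε / 12) = Real.log ε - Real.log 12 :=
      Real.log_div hε.ne' (by norm_num)
    rw [hl, abs_of_neg (by linarith), div_le_iff₀ (by linarith)] at h1
    rw [abs_of_neg hneg, div_le_iff₀ (by linarith)]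
    have h4 := (hZ (ε / 12) (by positivity)).2.2
    rw [show 12 * (ε / 12) = ε by ring] at h4
    have h5 : b * Real.log 12 / γ < -Real.log ε := by linarith
    rw [div_lt_iff₀ hγ] at h5
    nlinarith
  rcases V.eq_empty_or_nonempty with hVe | ⟨b, hb⟩
  · have : U = ∅ := subset_empty_iff.1 (hVe ▸ hUV)
    rw [this, hVe]
  · have hUne : U.Nonempty := ⟨b + 1, hVU b hb 1 one_pos⟩
    refine le_antisymm ?_ (csInf_le_csInf ⟨0, hV0⟩ hUne hUV)
    refine le_csInf ⟨b, hb⟩ fun c hc => ?_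
    refine le_of_forall_pos_le_add fun γ hγ => ?_
    exact csInf_le ⟨0, fun d hd => hV0 d (hUV hd)⟩ (hVU c hc γ hγ)

theorem stmt6 {X : Type*} [MetricSpace X] [CompactSpace X] [Nonempty X]
    [MeasurableSpace X] [BorelSpace X]
    (f : X → X) (hf : Continuous f) (g : ℕ → ℕ) (hg : IsBlowup g)
    (hgap : GAlmostProduct f g)
    (φ : X → ℝ) (hφ : Continuous φ) :
    mdimUpper f (Set.univ : Set X) =
      mdimUpper f (⋃ a ∈ Set.Icc (sInf (intPhi φ '' invSet f)) (sSup (intPhi φ '' invSet f)),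
        Rphi f φ a) := by
  refine mdim_eq f _ (hB_compare f _ fun ε hε s t hst h => ?_)
  exact core_union f hf g hg hgap φ hφ ε hε s t hst h

end
end

section
/- Let (X,d) be a compact metric space, f: X → X a continuous map with the g-almost product property for some blowup function g, and φ: X → ℝ a continuous function. If the irregular set I_φ is nonempty, then I_φ^C is nonempty and mdim_M^B-upper(I_φ,f,d) = mdim_M^B-upper(I_φ^C,f,d) = mdim_M^B-upper(X,f,d). -/
open MeasureTheory Filter Set Topology
open scoped ENNReal NNReal

open MMD MeasureTheory Filter Set Topology
open scoped ENNReal NNReal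

noncomputable section

/-! ### Basic facts on Bowen entropy -/

theorem aux_one_le_coverSum {X : Type*} [PseudoMetricSpace X] (f : X → X) {Z : Set X}
    (hZ : Z.Nonempty) {s : ℝ} (hs : s ≤ 0) {ε : ℝ} {C : Set (X × ℕ)}
    (hC : Z ⊆ ⋃ p ∈ C, bowenBall f p.1 p.2 ε) : 1 ≤ coverSum s C := by
  obtain ⟨z, hz⟩ := hZ
  obtain ⟨p, hp⟩ := Set.mem_iUnion.1 (hC hz)
  obtain ⟨hpC, -⟩ := Set.mem_iUnion.1 hp
  unfold coverSum
  refine le_trans ?_ (ENNReal.le_tsum (⟨p, hpC⟩ : C))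
  rw [ENNReal.one_le_ofReal]
  apply Real.one_le_exp
  have : (0:ℝ) ≤ (p.2 : ℝ) := Nat.cast_nonneg _
  nlinarith

theorem aux_mem_pos {X : Type*} [PseudoMetricSpace X] (f : X → X) {Z : Set X}
    (hZ : Z.Nonempty) {s ε : ℝ} (h : mBLim f Z s ε = 0) : 0 < s := by
  by_contra hs
  push Not at hs
  have h1 : (1 : ℝ≥0∞) ≤ mB f Z s 0 ε := by
    unfold mB
    refine le_iInf fun C => le_iInf fun _ => le_iInf fun _ => le_iInf fun hC => ?_
    exact aux_one_le_coverSum f hZ hs hC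
  have h2 : mB f Z s 0 ε ≤ mBLim f Z s ε := le_iSup (fun N => mB f Z s N ε) 0
  rw [h] at h2
  exact absurd (h1.trans h2) (by simp)

theorem aux_mB_mono {X : Type*} [PseudoMetricSpace X] (f : X → X) {Z W : Set X} (h : Z ⊆ W)
    (s : ℝ) (N : ℕ) (ε : ℝ) : mB f Z s N ε ≤ mB f W s N ε := by
  unfold mB
  refine le_iInf fun C => le_iInf fun h1 => le_iInf fun h2 => le_iInf fun hC => ?_
  exact iInf_le_of_le C (iInf_le_of_le h1 (iInf_le_of_le h2 (iInf_le_of_le (h.trans hC) le_rfl)))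

theorem aux_mBLim_mono {X : Type*} [PseudoMetricSpace X] (f : X → X) {Z W : Set X} (h : Z ⊆ W)
    (s : ℝ) (ε : ℝ) : mBLim f Z s ε ≤ mBLim f W s ε :=
  iSup_mono fun N => aux_mB_mono f h s N ε

theorem aux_bddBelow {X : Type*} [PseudoMetricSpace X] (f : X → X) {Z : Set X}
    (hZ : Z.Nonempty) (ε : ℝ) : BddBelow {s : ℝ | mBLim f Z s ε = 0} :=
  ⟨0, fun _ hs => (aux_mem_pos f hZ hs).le⟩

theorem aux_hB_nonneg {X : Type*} [PseudoMetricSpace X] (f : X → X) {Z : Set X}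
    (hZ : Z.Nonempty) (ε : ℝ) : 0 ≤ hB f Z ε :=
  Real.sInf_nonneg fun _ hs => (aux_mem_pos f hZ hs).le

/-- covers by Bowen balls of exact length `n` with at most `N^n` elements. -/
theorem aux_cover_pow {X : Type*} [PseudoMetricSpace X] [CompactSpace X] [Nonempty X] (f : X → X)
    {ε : ℝ} (hε : 0 < ε) : ∃ N : ℕ, 0 < N ∧ ∀ n : ℕ, ∃ C : Finset X, C.card ≤ N ^ n ∧
      ∀ x : X, ∃ c ∈ C, x ∈ bowenBall f c n ε := by
  classical
  obtain ⟨t, -, htf, ht⟩ := (isCompact_univ (X := X)).finite_cover_balls (e := ε / 2) (by linarith)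
  set T := htf.toFinset with hT
  have hcov : ∀ x : X, ∃ c ∈ T, dist x c < ε / 2 := by
    intro x
    have := ht (Set.mem_univ x)
    simp only [Set.mem_iUnion, Metric.mem_ball] at this
    obtain ⟨c, hc, hd⟩ := this
    exact ⟨c, by simpa [hT] using hc, hd⟩
  refine ⟨T.card + 1, by omega, fun n => ?_⟩
  choose κ hκ1 hκ2 using hcov
  let code : X → (Fin n → T) := fun x i => ⟨κ (f^[i] x), hκ1 _⟩
  have hfin : (Set.range code).Finite := Set.toFinite _
  choose! pick hpick using fun (c : Fin n → T) (hc : c ∈ Set.range code) => hc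
  refine ⟨hfin.toFinset.image pick, ?_, ?_⟩
  · refine Finset.card_image_le.trans ?_
    calc hfin.toFinset.card ≤ (Finset.univ : Finset (Fin n → T)).card :=
          Finset.card_le_card (Finset.subset_univ _)
      _ = T.card ^ n := by simp
      _ ≤ _ := Nat.pow_le_pow_left (by omega) n
  · intro x
    refine ⟨pick (code x), Finset.mem_image.2 ⟨code x, by simp, rfl⟩, ?_⟩
    intro i hi
    have h1 : code (pick (code x)) = code x := hpick _ ⟨x, rfl⟩
    have h2 := congrArg Subtype.val (congrFun h1 ⟨i, hi⟩)
    simp only [code] at h2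
    have h3 := hκ2 (f^[i] (pick (code x)))
    have h4 := hκ2 (f^[i] x)
    rw [h2] at h3
    calc _ ≤ dist (f^[i] (pick (code x))) (κ (f^[i] x)) + dist (κ (f^[i] x)) (f^[i] x) :=
          dist_triangle _ _ _
      _ < ε := by rw [dist_comm (κ _)]; linarith

theorem aux_mB_le_card {X : Type*} [PseudoMetricSpace X] (f : X → X) {ε : ℝ} {s : ℝ} {N n : ℕ}
    (hn : N ≤ n) (C : Finset X) (hC : ∀ x : X, ∃ c ∈ C, x ∈ bowenBall f c n ε) :
    mB f Set.univ s N ε ≤ ENNReal.ofReal (C.card * Real.exp (-s * n)) := by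
  classical
  let D : Finset (X × ℕ) := C.image fun c => (c, n)
  have hDn : ∀ p ∈ D, p.2 = n := by
    intro p hp
    obtain ⟨c, -, rfl⟩ := Finset.mem_image.1 hp
    rfl
  unfold mB
  refine iInf_le_of_le (D : Set (X × ℕ)) (iInf_le_of_le D.countable_toSet
    (iInf_le_of_le (fun p hp => by rw [hDn p hp]; exact hn) (iInf_le_of_le ?_ ?_)))
  · intro x _
    obtain ⟨c, hc, hx⟩ := hC x
    simp only [Set.mem_iUnion]
    exact ⟨(c, n), by simpa [D] using hc, hx⟩
  · unfold coverSum
    have h1 : ∑' p : (D : Set (X × ℕ)), ENNReal.ofReal (Real.exp (-s * ((p : X × ℕ).2 : ℝ)))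
        = ∑ p ∈ D, ENNReal.ofReal (Real.exp (-s * ((p : X × ℕ).2 : ℝ))) :=
      Finset.tsum_subtype D (fun p => ENNReal.ofReal (Real.exp (-s * ((p : X × ℕ).2 : ℝ))))
    rw [h1, Finset.sum_congr rfl (fun p hp => by rw [hDn p hp]), Finset.sum_const, nsmul_eq_mul,
      ENNReal.ofReal_mul (by positivity), ENNReal.ofReal_natCast]
    gcongr
    exact Finset.card_image_le

theorem aux_nonempty_set {X : Type*} [PseudoMetricSpace X] [CompactSpace X] [Nonempty X] (f : X → X)
    {ε : ℝ} (hε : 0 < ε) : {s : ℝ | mBLim f (Set.univ : Set X) s ε = 0}.Nonempty := by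
  obtain ⟨N, hN, hcov⟩ := aux_cover_pow f hε
  refine ⟨Real.log N + 1, ?_⟩
  simp only [Set.mem_ofPred_eq, mBLim, ENNReal.iSup_eq_zero]
  intro N0
  have hle : ∀ n ≥ N0, mB f (Set.univ : Set X) (Real.log N + 1) N0 ε
      ≤ ENNReal.ofReal (Real.exp (-(n:ℝ))) := by
    intro n hn
    obtain ⟨C, hC1, hC2⟩ := hcov n
    refine (aux_mB_le_card f hn C hC2).trans (ENNReal.ofReal_le_ofReal ?_)
    have h1 : (C.card : ℝ) ≤ (N:ℝ) ^ n := by exact_mod_cast hC1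
    have h2 : (N:ℝ)^n = Real.exp (n * Real.log N) := by
      rw [mul_comm, Real.exp_mul, Real.exp_log (by exact_mod_cast hN), Real.rpow_natCast]
    calc _ ≤ Real.exp (n * Real.log N) * Real.exp (-(Real.log N + 1) * n) := by
          rw [← h2]; gcongr
      _ = _ := by rw [← Real.exp_add]; congr 1; ring
  have ht : Tendsto (fun n : ℕ => ENNReal.ofReal (Real.exp (-(n:ℝ)))) atTop (𝓝 0) := by
    rw [← ENNReal.ofReal_zero]
    refine ENNReal.tendsto_ofReal ?_
    exact Real.tendsto_exp_neg_atTop_nhds_zero.comp tendsto_natCast_atTop_atTop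
  refine le_antisymm (ge_of_tendsto ht ?_) bot_le
  exact eventually_atTop.2 ⟨N0, hle⟩

theorem aux_hB_mono {X : Type*} [PseudoMetricSpace X] [CompactSpace X] [Nonempty X] (f : X → X)
    {Z W : Set X} (hZ : Z.Nonempty) (h : Z ⊆ W) {ε : ℝ} (hε : 0 < ε) :
    hB f Z ε ≤ hB f W ε := by
  refine csInf_le_csInf (aux_bddBelow f hZ ε) ?_ ?_
  · obtain ⟨s, hs⟩ := aux_nonempty_set f hε
    exact ⟨s, le_antisymm ((aux_mBLim_mono f (Set.subset_univ _) s ε).trans hs.le) bot_le⟩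
  · intro s hs
    exact le_antisymm ((aux_mBLim_mono f h s ε).trans (le_of_eq hs)) bot_le

/-- lower exponential bound on the cardinality of Bowen covers of `X`. -/
theorem aux_card_lower {X : Type*} [PseudoMetricSpace X] [CompactSpace X] [Nonempty X]
    (f : X → X) {ε s : ℝ} (hs : s < hB f (Set.univ : Set X) ε) :
    ∃ c : ℝ, 0 < c ∧ ∃ N : ℕ, ∀ n ≥ N, ∀ C : Finset X,
      (∀ x : X, ∃ c ∈ C, x ∈ bowenBall f c n ε) → c * Real.exp (s * n) ≤ C.card := by
  have h0 : mBLim f (Set.univ : Set X) s ε ≠ 0 := by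
    intro h
    exact absurd (csInf_le (aux_bddBelow f Set.univ_nonempty ε) h) (not_le.2 hs)
  simp only [mBLim, ne_eq, ENNReal.iSup_eq_zero, not_forall] at h0
  obtain ⟨N, hN⟩ := h0
  obtain ⟨c, hc0, hc⟩ := ENNReal.lt_iff_exists_nnreal_btwn.1 (pos_iff_ne_zero.2 hN)
  refine ⟨c, by exact_mod_cast hc0, N, fun n hn C hC => ?_⟩
  have h1 := hc.le.trans (aux_mB_le_card f (s := s) hn C hC)
  rw [← ENNReal.ofReal_coe_nnreal, ENNReal.ofReal_le_ofReal_iff (by positivity)] at h1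
  calc (c:ℝ) * Real.exp (s * n) ≤ C.card * Real.exp (-s * n) * Real.exp (s * n) := by gcongr
    _ = C.card := by rw [mul_assoc, ← Real.exp_add]; simp

/-! ### Comparison of limsups -/

theorem aux_limsup_eq {u v w : ℝ → ℝ} (hu0 : ∀ ε > 0, 0 ≤ u ε)
    (huv : ∀ ε > 0, u ε ≤ v ε) (hvw : ∀ ε > 0, v ε ≤ w ε)
    (hwu : ∀ ε > 0, w (7 * ε) ≤ u ε) :
    limsup (fun ε : ℝ => v ε / |Real.log ε|) (𝓝[>] (0:ℝ)) =
      limsup (fun ε : ℝ => w ε / |Real.log ε|) (𝓝[>] (0:ℝ)) := by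
  have hpos : ∀ᶠ ε : ℝ in 𝓝[>] (0:ℝ), 0 < ε := eventually_mem_nhdsWithin
  rw [limsup_eq, limsup_eq]
  set A := {a : ℝ | ∀ᶠ ε in 𝓝[>] (0:ℝ), v ε / |Real.log ε| ≤ a} with hA
  set B := {a : ℝ | ∀ᶠ ε in 𝓝[>] (0:ℝ), w ε / |Real.log ε| ≤ a} with hB
  have hA0 : ∀ a ∈ A, 0 ≤ a := by
    intro a ha
    obtain ⟨ε, h1, h2⟩ := (hpos.and ha).exists
    exact le_trans (div_nonneg ((hu0 ε h1).trans (huv ε h1)) (abs_nonneg _)) h2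
  have hBA : B ⊆ A := by
    intro a ha
    change ∀ᶠ ε in 𝓝[>] (0:ℝ), v ε / |Real.log ε| ≤ a
    filter_upwards [hpos, ha] with ε h1 h2
    exact le_trans (div_le_div_of_nonneg_right (hvw ε h1) (abs_nonneg _)) h2
  have hAB : ∀ a ∈ A, ∀ η > 0, a + η ∈ B := by
    intro a ha η hη
    have ha0 := hA0 a ha
    have hlog : Tendsto Real.log (𝓝[>] (0:ℝ)) atBot := Real.tendsto_log_nhdsGT_zero
    have hdiv : Tendsto (fun ε : ℝ => ε / 7) (𝓝[>] (0:ℝ)) (𝓝[>] (0:ℝ)) := by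
      refine tendsto_nhdsWithin_iff.2 ⟨?_, ?_⟩
      · have : Tendsto (fun ε : ℝ => ε / 7) (𝓝 0) (𝓝 (0 / 7)) := tendsto_id.div_const 7
        rw [zero_div] at this
        exact this.mono_left nhdsWithin_le_nhds
      · filter_upwards [hpos] with ε h
        exact div_pos h (by norm_num)
    have h3 := hdiv.eventually ha
    have h4 := hlog.eventually (eventually_le_atBot (-1 - a * Real.log 7 / η))
    change ∀ᶠ ε in 𝓝[>] (0:ℝ), w ε / |Real.log ε| ≤ a + η
    filter_upwards [hpos, h3, h4] with ε e1 e3 e4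
    have hl7 : 0 < Real.log 7 := Real.log_pos (by norm_num)
    have hnn : 0 ≤ a * Real.log 7 / η := by positivity
    have hle : Real.log (ε / 7) = Real.log ε - Real.log 7 := by
      rw [Real.log_div e1.ne' (by norm_num)]
    have hneg : Real.log ε < 0 := by linarith
    rw [hle, abs_of_neg (by linarith)] at e3
    rw [abs_of_neg hneg, div_le_iff₀ (by linarith)]
    rw [div_le_iff₀ (by linarith)] at e3
    have h5 := hwu (ε / 7) (by positivity)
    rw [show 7 * (ε / 7) = ε by ring] at h5
    have h6 := huv (ε / 7) (by positivity)
    have h7 : a * Real.log 7 ≤ η * (- Real.log ε) := by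
      have : a * Real.log 7 / η ≤ - Real.log ε := by linarith
      rw [div_le_iff₀ hη] at this
      linarith
    nlinarith
  by_cases hne : A.Nonempty
  · have hBne : B.Nonempty := by
      obtain ⟨a, ha⟩ := hne
      exact ⟨a + 1, hAB a ha 1 one_pos⟩
    apply le_antisymm
    · exact csInf_le_csInf ⟨0, hA0⟩ hBne hBA
    · refine le_csInf hne fun a ha => ?_
      refine le_of_forall_pos_le_add fun η hη => ?_
      exact csInf_le ⟨0, fun b hb => hA0 b (hBA hb)⟩ (hAB a ha η hη)
  · rw [Set.not_nonempty_iff_eq_empty] at hne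
    have : B = ∅ := Set.subset_empty_iff.1 (hne ▸ hBA)
    rw [hne, this]

/-! ### Infinite gluing -/

theorem aux_blowup_closed {X : Type*} [MetricSpace X] {f : X → X} (hf : Continuous f)
    (g : ℕ → ℕ) (x : X) (n : ℕ) (ε : ℝ) : IsClosed (blowupBall f g x n ε) := by
  classical
  have h : blowupBall f g x n ε = ⋃ Λ ∈ (((Finset.range n).powerset.filter
      fun Λ => (Finset.range n \ Λ).card ≤ g n : Finset (Finset ℕ)) : Set (Finset ℕ)),
      {y | ∀ j ∈ Λ, dist (f^[j] x) (f^[j] y) ≤ ε} := by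
    ext y
    simp only [blowupBall, Set.mem_iUnion, Finset.coe_filter, Finset.mem_powerset]
    constructor
    · rintro ⟨Λ, h1, h2, h3⟩
      refine ⟨Λ, ⟨h1, ?_⟩, h3⟩
      convert h2
    · rintro ⟨Λ, ⟨h1, h2⟩, h3⟩
      refine ⟨Λ, h1, ?_, h3⟩
      convert h2
  rw [h]
  refine Set.Finite.isClosed_biUnion (Finset.finite_toSet _) fun Λ _ => ?_
  have h2 : {y | ∀ j ∈ Λ, dist (f^[j] x) (f^[j] y) ≤ ε}
      = ⋂ j ∈ Λ, {y | dist (f^[j] x) (f^[j] y) ≤ ε} := by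
    ext y; simp
  rw [h2]
  refine isClosed_biInter fun j _ => ?_
  exact isClosed_le (continuous_const.dist (hf.iterate j)) continuous_const

/-- The gluing part of the g-almost product property. -/
def auxGlue {X : Type*} [PseudoMetricSpace X] (f : X → X) (g : ℕ → ℕ) (m : ℝ → ℕ) : Prop :=
  ∀ (k : ℕ) (x : ℕ → X) (ε : ℕ → ℝ) (n : ℕ → ℕ),
      (∀ j < k, 0 < ε j) → (∀ j < k, m (ε j) ≤ n j) →
      (⋂ j ∈ Finset.range k,
        (f^[∑ i ∈ Finset.range j, n i] ⁻¹' blowupBall f g (x j) (n j) (ε j))).Nonempty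

theorem aux_glue {X : Type*} [MetricSpace X] [CompactSpace X] {f : X → X} (hf : Continuous f)
    {g : ℕ → ℕ} {m : ℝ → ℕ} (hm : auxGlue f g m) (x : ℕ → X) (ε : ℕ → ℝ) (n : ℕ → ℕ)
    (hε : ∀ j, 0 < ε j) (hn : ∀ j, m (ε j) ≤ n j) :
    ∃ z : X, ∀ j, f^[∑ i ∈ Finset.range j, n i] z ∈ blowupBall f g (x j) (n j) (ε j) := by
  have hcl : ∀ k, IsClosed (⋂ j ∈ Finset.range k,
        (f^[∑ i ∈ Finset.range j, n i] ⁻¹' blowupBall f g (x j) (n j) (ε j))) := fun k =>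
    isClosed_biInter fun j _ => (aux_blowup_closed hf g _ _ _).preimage (hf.iterate _)
  obtain ⟨z, hz⟩ := IsCompact.nonempty_iInter_of_sequence_nonempty_isCompact_isClosed
    (fun k => ⋂ j ∈ Finset.range k,
        (f^[∑ i ∈ Finset.range j, n i] ⁻¹' blowupBall f g (x j) (n j) (ε j)))
    (fun k => by
      apply Set.biInter_subset_biInter_left
      intro j hj
      have : j < k := by simpa using hj
      simpa using this.trans (Nat.lt_succ_self k))
    (fun k => hm k x ε n (fun j _ => hε j) (fun j _ => hn j)) (hcl 0).isCompact hcl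
  refine ⟨z, fun j => ?_⟩
  have := Set.mem_iInter.1 hz (j + 1)
  simp only [Set.mem_iInter] at this
  exact this j (by simp)

/-! ### Hamming-type covers and separated sets -/

open Classical in
/-- Times at which two orbits are more than `ε` apart. -/
def auxBad {X : Type*} [PseudoMetricSpace X] (f : X → X) (x y : X) (n : ℕ) (ε : ℝ) : Finset ℕ :=
  (Finset.range n).filter fun j => ε < dist (f^[j] x) (f^[j] y)

theorem aux_ham_cover {X : Type*} [MetricSpace X] [CompactSpace X] [Nonempty X] (f : X → X)
    {ε γ : ℝ} (hε : 0 < ε) (hγ : 0 < γ) : ∃ δ : ℝ, 0 < δ ∧ ∀ (n : ℕ) (x : X),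
      ∃ C : Finset X, (C.card : ℝ) ≤ Real.exp (γ * n) ∧
        ∀ y : X, ((auxBad f x y n (3 * ε)).card : ℝ) < δ * n →
          ∃ c ∈ C, y ∈ bowenBall f c n (7 * ε) := by
  classical
  obtain ⟨t, -, htf, ht⟩ := (isCompact_univ (X := X)).finite_cover_balls (e := 3 * ε) (by linarith)
  set T := htf.toFinset with hT
  have hcov : ∀ x : X, ∃ c ∈ T, dist x c < 3 * ε := by
    intro x
    have := ht (Set.mem_univ x)
    simp only [Set.mem_iUnion, Metric.mem_ball] at this
    obtain ⟨c, hc, hd⟩ := this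
    exact ⟨c, by simpa [hT] using hc, hd⟩
  choose κ hκ1 hκ2 using hcov
  set N : ℝ := (T.card : ℝ) with hN
  obtain ⟨Λ, hΛ0, hΛ⟩ : ∃ Λ : ℝ, 0 < Λ ∧ Real.exp (-Λ) * N ≤ γ / 2 := by
    have h1 : Tendsto (fun Λ : ℝ => Real.exp (-Λ) * N) atTop (𝓝 (0 * N)) :=
      Real.tendsto_exp_neg_atTop_nhds_zero.mul_const N
    rw [zero_mul] at h1
    have h2 := h1.eventually (ge_mem_nhds (show 0 < γ / 2 by linarith))
    obtain ⟨Λ, h3, h4⟩ := ((eventually_gt_atTop 0).and h2).exists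
    exact ⟨Λ, h3, h4⟩
  refine ⟨γ / (2 * Λ), by positivity, fun n x => ?_⟩
  set δ := γ / (2 * Λ) with hδ
  have hδΛ : Λ * δ = γ / 2 := by rw [hδ]; field_simp
  let S : Finset (Fin n → Option T) := Finset.univ.filter fun ψ =>
    ((Finset.univ.filter fun i => ψ i ≠ none).card : ℝ) < δ * n
  have hS : (S.card : ℝ) ≤ Real.exp (γ * n) := by
    let wt : Option T → ℝ := fun o => if o = none then 1 else Real.exp (-Λ)
    have hwt : ∀ o, 0 < wt o := by
      intro o; simp only [wt]; split_ifs <;> positivity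
    have hsum : ∑ ψ : Fin n → Option T, ∏ i, wt (ψ i) = (1 + Real.exp (-Λ) * N) ^ n := by
      have h1 := Finset.prod_univ_sum (fun _ : Fin n => (Finset.univ : Finset (Option T)))
        (fun _ o => wt o)
      rw [Fintype.piFinset_univ] at h1
      rw [← h1, Finset.prod_const, Finset.card_univ, Fintype.card_fin, Fintype.sum_option]
      congr 1
      simp [wt, hN, mul_comm]
    have hprod : ∀ ψ ∈ S, Real.exp (-(γ / 2 * n)) ≤ ∏ i, wt (ψ i) := by
      intro ψ hψ
      have hψ' := (Finset.mem_filter.1 hψ).2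
      have h1 : ∏ i, wt (ψ i) = Real.exp (-Λ) ^ (Finset.univ.filter fun i => ψ i ≠ none).card := by
        simp only [wt]
        rw [Finset.prod_ite]
        simp
      rw [h1, ← Real.exp_nat_mul]
      apply Real.exp_le_exp.2
      nlinarith
    have h2 : (S.card : ℝ) * Real.exp (-(γ / 2 * n)) ≤ Real.exp (γ / 2 * n) := by
      calc (S.card : ℝ) * Real.exp (-(γ / 2 * n)) = ∑ ψ ∈ S, Real.exp (-(γ / 2 * n)) := by
            rw [Finset.sum_const, nsmul_eq_mul]
        _ ≤ ∑ ψ ∈ S, ∏ i, wt (ψ i) := Finset.sum_le_sum hprod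
        _ ≤ ∑ ψ : Fin n → Option T, ∏ i, wt (ψ i) :=
            Finset.sum_le_sum_of_subset_of_nonneg (Finset.subset_univ _)
              fun ψ _ _ => Finset.prod_nonneg fun i _ => (hwt _).le
        _ = (1 + Real.exp (-Λ) * N) ^ n := hsum
        _ ≤ (Real.exp (γ / 2)) ^ n := by
            have := Real.add_one_le_exp (γ / 2)
            have h0 : 0 ≤ Real.exp (-Λ) * N := by positivity
            gcongr
            linarith
        _ = _ := by rw [← Real.exp_nat_mul]; ring_nf
    calc (S.card : ℝ) = S.card * Real.exp (-(γ / 2 * n)) * Real.exp (γ / 2 * n) := by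
          rw [mul_assoc, ← Real.exp_add]; simp
      _ ≤ Real.exp (γ / 2 * n) * Real.exp (γ / 2 * n) := by gcongr
      _ = _ := by rw [← Real.exp_add]; ring_nf
  let code : X → (Fin n → Option T) := fun y i =>
    if 3 * ε < dist (f^[i] x) (f^[i] y) then some ⟨κ (f^[i] y), hκ1 _⟩ else none
  choose! pick hpick using fun (c : Fin n → Option T) (hc : c ∈ Set.range code) => hc
  refine ⟨S.image pick, ?_, ?_⟩
  · refine le_trans ?_ hS
    exact_mod_cast Finset.card_image_le
  · intro y hy
    have hyS : code y ∈ S := by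
      refine Finset.mem_filter.2 ⟨Finset.mem_univ _, lt_of_le_of_lt ?_ hy⟩
      norm_cast
      refine Finset.card_le_card_of_injOn (fun i : Fin n => (i : ℕ)) ?_
        (fun i _ j _ h => Fin.ext h)
      intro i hi
      have hi2 : code y i ≠ none := by simpa using hi
      simp only [auxBad, Finset.coe_filter, Finset.mem_range]
      refine ⟨i.2, ?_⟩
      by_contra hcon
      exact hi2 (by simp only [code]; rw [if_neg hcon])
    refine ⟨pick (code y), Finset.mem_image.2 ⟨_, hyS, rfl⟩, ?_⟩
    intro i hi
    have h1 : code (pick (code y)) = code y := hpick _ ⟨y, rfl⟩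
    have h2 := congrFun h1 ⟨i, hi⟩
    set p := pick (code y)
    simp only [code] at h2
    by_cases hb : 3 * ε < dist (f^[i] x) (f^[i] y)
    · rw [if_pos hb] at h2
      split_ifs at h2 with hb2
      have h3 := congrArg Subtype.val (Option.some.inj h2)
      simp only at h3
      have h4 := hκ2 (f^[i] p)
      have h5 := hκ2 (f^[i] y)
      rw [h3] at h4
      have := dist_triangle_right (f^[i] p) (f^[i] y) (κ (f^[i] y))
      linarith
    · rw [if_neg hb] at h2
      split_ifs at h2 with hb2
      have := dist_triangle_left (f^[i] p) (f^[i] y) (f^[i] x)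
      linarith

theorem aux_bad_comm {X : Type*} [PseudoMetricSpace X] (f : X → X) (x y : X) (n : ℕ) (ε : ℝ) :
    auxBad f x y n ε = auxBad f y x n ε := by
  unfold auxBad
  simp only [dist_comm]

theorem aux_sep_exists {X : Type*} [MetricSpace X] (f : X → X)
    {ε δ Q L : ℝ} {n : ℕ} (hε : 0 < ε) (hδ : 0 < δ) (hn : 0 < n) (hQ : 0 < Q)
    (hham : ∀ x : X, ∃ C : Finset X, (C.card : ℝ) ≤ Q ∧
        ∀ y : X, ((auxBad f x y n (3 * ε)).card : ℝ) < δ * n →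
          ∃ c ∈ C, y ∈ bowenBall f c n (7 * ε))
    (hL : ∀ C : Finset X, (∀ x : X, ∃ c ∈ C, x ∈ bowenBall f c n (7 * ε)) → L ≤ C.card) :
    ∃ F : Finset X, (∀ x ∈ F, ∀ y ∈ F, x ≠ y →
      δ * n ≤ ((auxBad f x y n (3 * ε)).card : ℝ)) ∧ L ≤ F.card * Q := by
  classical
  by_contra! hcon
  let A : Set ℕ := {k | ∃ F : Finset X, (∀ x ∈ F, ∀ y ∈ F, x ≠ y →
      δ * n ≤ ((auxBad f x y n (3 * ε)).card : ℝ)) ∧ F.card = k}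
  have hA0 : A.Nonempty := ⟨0, ∅, by simp, by simp⟩
  have hAb : BddAbove A := by
    refine ⟨⌈L / Q⌉₊, ?_⟩
    rintro k ⟨F, hF, rfl⟩
    have h1 := hcon F hF
    rw [← lt_div_iff₀ hQ] at h1
    exact_mod_cast (h1.le.trans (Nat.le_ceil _))
  obtain ⟨F, hF, hFk⟩ := Nat.sSup_mem hA0 hAb
  choose C hC1 hC2 using hham
  have hcov : ∀ y : X, ∃ c ∈ F.biUnion C, y ∈ bowenBall f c n (7 * ε) := by
    intro y
    by_cases h : ∃ x ∈ F, ((auxBad f x y n (3 * ε)).card : ℝ) < δ * n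
    · obtain ⟨x, hx, hxy⟩ := h
      obtain ⟨c, hc, hyc⟩ := hC2 x y hxy
      exact ⟨c, Finset.mem_biUnion.2 ⟨x, hx, hc⟩, hyc⟩
    · push Not at h
      exfalso
      have hpos : 0 < δ * n := by positivity
      have hyF : y ∉ F := by
        intro hy
        have := h y hy
        have h0 : auxBad f y y n (3 * ε) = ∅ := by
          unfold auxBad
          rw [Finset.filter_eq_empty_iff]
          intro j _
          simp; linarith
        rw [h0] at this
        simp at this
        linarith
      have hins : (insert y F).card ∈ A := by
        refine ⟨insert y F, ?_, rfl⟩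
        intro a ha b hb hab
        rcases Finset.mem_insert.1 ha with rfl | ha' <;>
          rcases Finset.mem_insert.1 hb with rfl | hb'
        · exact absurd rfl hab
        · rw [aux_bad_comm]; exact h b hb'
        · exact h a ha'
        · exact hF a ha' b hb' hab
      have h3 := le_csSup hAb hins
      rw [Finset.card_insert_of_notMem hyF, ← hFk] at h3
      omega
  have h1 := hL _ hcov
  have h2 : ((F.biUnion C).card : ℝ) ≤ F.card * Q := by
    calc ((F.biUnion C).card : ℝ) ≤ ∑ x ∈ F, ((C x).card : ℝ) := by
          exact_mod_cast Finset.card_biUnion_le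
      _ ≤ ∑ x ∈ F, Q := Finset.sum_le_sum fun x _ => hC1 x
      _ = _ := by rw [Finset.sum_const, nsmul_eq_mul]
  have := hcon F hF
  linarith

/-! ### Birkhoff sums: low and high blocks -/

theorem aux_birk_abs {X : Type*} {f : X → X} {φ : X → ℝ} {B : ℝ} (hB : ∀ x, |φ x| ≤ B)
    (n : ℕ) (x : X) : |birkhoffSum f φ n x| ≤ n * B := by
  unfold birkhoffSum
  refine (Finset.abs_sum_le_sum_abs _ _).trans ?_
  refine (Finset.sum_le_sum fun i _ => hB (f^[i] x)).trans ?_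
  rw [Finset.sum_const, nsmul_eq_mul, Finset.card_range]

theorem aux_lo {X : Type*} {f : X → X} {φ : X → ℝ} {B : ℝ} (hB : ∀ x, |φ x| ≤ B)
    {x : X} {α' α : ℝ} (hα : α' < α)
    (hfr : ∃ᶠ p : ℕ in atTop, birkhoffSum f φ p x / p < α') {n : ℕ} (hn : 0 < n) :
    ∃ y, birkhoffSum f φ n y ≤ n * α := by
  by_contra! hcon
  have hmul : ∀ q : ℕ, (n * q : ℝ) * α ≤ birkhoffSum f φ (n * q) x := by
    intro q
    induction q with
    | zero => simp
    | succ q ih =>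
      rw [Nat.mul_succ, birkhoffSum_add]
      have := hcon (f^[n * q] x)
      push_cast
      linarith
  have hB0 : 0 ≤ B := (abs_nonneg _).trans (hB x)
  have hp : ∀ p : ℕ, α * p - n * (B + |α|) ≤ birkhoffSum f φ p x := by
    intro p
    have h1 : p = n * (p / n) + p % n := (Nat.div_add_mod p n).symm
    have h2 := hmul (p / n)
    have h3 := neg_le_of_abs_le (aux_birk_abs (f := f) hB (p % n) (f^[n * (p / n)] x))
    have h4 : birkhoffSum f φ p x = birkhoffSum f φ (n * (p / n)) x
        + birkhoffSum f φ (p % n) (f^[n * (p / n)] x) := by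
      rw [← birkhoffSum_add, ← h1]
    have h5 : (p : ℝ) = n * (p / n : ℕ) + (p % n : ℕ) := by exact_mod_cast h1
    have h6 : ((p % n : ℕ) : ℝ) ≤ n := by exact_mod_cast (Nat.mod_lt p hn).le
    have h7 : (0:ℝ) ≤ ((p % n : ℕ) : ℝ) := Nat.cast_nonneg _
    have h8 := le_abs_self α
    have h9 : α * ((p % n : ℕ) : ℝ) ≤ |α| * n := by
      calc _ ≤ |α| * ((p % n : ℕ) : ℝ) := by gcongr
        _ ≤ _ := by gcongr
    rw [h4, h5]
    nlinarith
  have hlarge : ∀ᶠ p : ℕ in atTop, (n * (B + |α|)) / (α - α') < p :=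
    tendsto_natCast_atTop_atTop.eventually (eventually_gt_atTop _)
  obtain ⟨p, h1, h2, h3⟩ := (hfr.and_eventually (hlarge.and (eventually_gt_atTop 0))).exists
  have hp0 : (0:ℝ) < p := by exact_mod_cast h3
  rw [div_lt_iff₀ hp0] at h1
  rw [div_lt_iff₀ (by linarith)] at h2
  have := hp p
  nlinarith

theorem aux_lohi {X : Type*} {f : X → X} {φ : X → ℝ} {B : ℝ} (hB : ∀ x, |φ x| ≤ B)
    (hne : (Iphi f φ).Nonempty) : ∃ α β : ℝ, α < β ∧ ∀ n : ℕ, 0 < n →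
      (∃ y, birkhoffSum f φ n y ≤ n * α) ∧ ∃ y, n * β ≤ birkhoffSum f φ n y := by
  obtain ⟨x, hx⟩ := hne
  set A : ℕ → ℝ := fun p => birkhoffSum f φ p x / p with hA
  have hB0 : 0 ≤ B := (abs_nonneg _).trans (hB x)
  have hAb : ∀ p, |A p| ≤ B := by
    intro p
    simp only [hA, abs_div, Nat.abs_cast]
    exact div_le_of_le_mul₀ (Nat.cast_nonneg _) hB0 (by
      rw [mul_comm]; exact aux_birk_abs hB p x)
  have hbd1 : IsBoundedUnder (· ≤ ·) atTop A :=
    isBoundedUnder_of ⟨B, fun p => (abs_le.1 (hAb p)).2⟩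
  have hbd2 : IsBoundedUnder (· ≥ ·) atTop A :=
    isBoundedUnder_of ⟨-B, fun p => (abs_le.1 (hAb p)).1⟩
  have hlt : liminf A atTop < limsup A atTop := by
    by_contra! hcon
    refine hx ⟨liminf A atTop, ?_⟩
    exact tendsto_of_le_liminf_of_limsup_le le_rfl hcon hbd1 hbd2
  obtain ⟨a1, h1, h1'⟩ := exists_between hlt
  obtain ⟨a2, h2, h2'⟩ := exists_between h1'
  obtain ⟨a3, h3, h3'⟩ := exists_between h2'
  obtain ⟨a4, h4, h4'⟩ := exists_between h3'
  have f1 : ∃ᶠ p in atTop, A p < a1 := frequently_lt_of_liminf_lt hbd1.isCoboundedUnder_ge h1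
  have f2 : ∃ᶠ p in atTop, a4 < A p := frequently_lt_of_lt_limsup hbd2.isCoboundedUnder_le h4'
  refine ⟨a2, a3, h3, fun n hn => ⟨aux_lo hB h2 f1 hn, ?_⟩⟩
  have hneg : ∀ p y, birkhoffSum f (-φ) p y = - birkhoffSum f φ p y := fun p y =>
    birkhoffSum_neg f φ p y
  obtain ⟨y, hy⟩ := aux_lo (f := f) (φ := -φ) (B := B) (x := x) (α' := -a4) (α := -a3) (n := n)
    (fun x => by simpa using hB x) (by linarith)
    (f2.mono fun p hp => by
      rw [hneg, neg_div]
      exact neg_lt_neg hp) hn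
  refine ⟨y, ?_⟩
  rw [hneg] at hy
  linarith

/-! ### Target blocks -/

/-- `U` can be visited by points tracing suitable orbit segments of any large length. -/
def auxGood {X : Type*} [PseudoMetricSpace X] (f : X → X) (g : ℕ → ℕ) (m : ℝ → ℕ)
    (U : Set X) : Prop :=
  ∃ r : ℝ, 0 < r ∧ ∃ L0 : ℕ, ∀ L ≥ L0, m r ≤ L ∧ ∃ y, ∀ z ∈ blowupBall f g y L r,
    ∃ i < L, f^[i] z ∈ U

theorem aux_good_univ {X : Type*} [PseudoMetricSpace X] [Nonempty X] (f : X → X) (g : ℕ → ℕ)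
    (m : ℝ → ℕ) : auxGood f g m Set.univ := by
  refine ⟨1, one_pos, max (m 1) 1, fun L hL => ⟨le_trans (le_max_left _ _) hL,
    Classical.arbitrary X, fun z _ => ⟨0, ?_, Set.mem_univ _⟩⟩⟩
  exact lt_of_lt_of_le one_pos (le_trans (le_max_right (m 1) 1) hL)

theorem aux_visits {X : Type*} [MeasurableSpace X] {f : X → X} (hf : Measurable f)
    (μ : ProbabilityMeasure X) (hμ : InvariantProb f μ) {U : Set X} (hU : MeasurableSet U)
    (L : ℕ) : ∃ y : X, ∃ V : Finset ℕ, V ⊆ Finset.range L ∧ (∀ i ∈ V, f^[i] y ∈ U) ∧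
      L * (μ : Measure X).real U ≤ V.card := by
  classical
  by_contra! hcon
  have hpres : MeasurePreserving f (μ : Measure X) (μ : Measure X) := ⟨hf, hμ⟩
  let F : X → ℝ := fun y => ∑ i ∈ Finset.range L, Set.indicator (f^[i] ⁻¹' U) (fun _ => (1:ℝ)) y
  have hms : ∀ i, MeasurableSet (f^[i] ⁻¹' U) := fun i => (hf.iterate i) hU
  have hInt : ∀ i ∈ Finset.range L, Integrable
      (Set.indicator (f^[i] ⁻¹' U) (fun _ => (1:ℝ))) (μ : Measure X) := fun i _ =>
    (integrable_const 1).indicator (hms i)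
  have h1 : ∫ y, F y ∂(μ : Measure X) = L * (μ : Measure X).real U := by
    simp only [F]
    rw [integral_finsetSum _ hInt]
    have : ∀ i ∈ Finset.range L, ∫ y, Set.indicator (f^[i] ⁻¹' U) (fun _ => (1:ℝ)) y
        ∂(μ : Measure X) = (μ : Measure X).real U := by
      intro i _
      rw [integral_indicator_const _ (hms i), smul_eq_mul, mul_one]
      simp only [Measure.real]
      rw [(hpres.iterate i).measure_preimage hU.nullMeasurableSet]
    rw [Finset.sum_congr rfl this, Finset.sum_const, Finset.card_range, nsmul_eq_mul]
  have hFint : Integrable F (μ : Measure X) := integrable_finsetSum _ hInt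
  have h2 : ∀ y, F y < L * (μ : Measure X).real U := by
    intro y
    have h3 := hcon y ((Finset.range L).filter fun i => f^[i] y ∈ U) (Finset.filter_subset _ _)
      (fun i hi => (Finset.mem_filter.1 hi).2)
    refine lt_of_le_of_lt (le_of_eq ?_) h3
    simp only [F, Set.indicator_apply, Set.mem_preimage]
    rw [Finset.sum_boole]
  obtain ⟨y, hy⟩ := exists_integral_le (μ := (μ : Measure X)) hFint
  rw [h1] at hy
  exact absurd hy (not_le.2 (h2 y))

theorem aux_good_of_support {X : Type*} [MetricSpace X] [MeasurableSpace X] [BorelSpace X]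
    {f : X → X} (hf : Continuous f) {g : ℕ → ℕ} (hg : IsBlowup g) (m : ℝ → ℕ)
    {μ : ProbabilityMeasure X} (hμ : μ ∈ invSet f) {x : X} (hx : x ∈ measSupport (μ : Measure X))
    {U : Set X} (hU : IsOpen U) (hxU : x ∈ U) : auxGood f g m U := by
  classical
  obtain ⟨r0, hr0, hball⟩ := Metric.isOpen_iff.1 hU x hxU
  have hpos : 0 < (μ : Measure X).real (Metric.ball x (r0 / 2)) :=
    ENNReal.toReal_pos (hx _ (Metric.ball_mem_nhds x (by linarith))).ne' (measure_ne_top _ _)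
  set p := (μ : Measure X).real (Metric.ball x (r0 / 2)) with hp
  have h1 : ∀ᶠ L : ℕ in atTop, (g L : ℝ) / L < p :=
    hg.ratio_tendsto_zero.eventually (gt_mem_nhds hpos)
  obtain ⟨L1, hL1⟩ := eventually_atTop.1 h1
  refine ⟨r0 / 4, by linarith, max (m (r0 / 4)) (max L1 1), fun L hL => ⟨?_, ?_⟩⟩
  · exact le_trans (le_max_left _ _) hL
  have hL1' : L1 ≤ L := le_trans (le_trans (le_max_left _ _) (le_max_right _ _)) hL
  have hLpos : 1 ≤ L := le_trans (le_trans (le_max_right L1 1) (le_max_right _ _)) hL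
  obtain ⟨y, V, hV1, hV2, hV3⟩ := aux_visits hf.measurable μ hμ
    (Metric.isOpen_ball (x := x) (ε := r0 / 2)).measurableSet L
  refine ⟨y, ?_⟩
  rintro z ⟨Λ, hΛ1, hΛ2, hΛ3⟩
  have hcard : g L < V.card := by
    have h2 := hL1 L hL1'
    have hL0 : (0:ℝ) < L := by exact_mod_cast hLpos
    rw [div_lt_iff₀ hL0] at h2
    have : (g L : ℝ) < V.card := by linarith
    exact_mod_cast this
  have hex : ∃ i ∈ V, i ∈ Λ := by
    by_contra! hcon
    have hsub : V ⊆ Finset.range L \ Λ := fun i hi =>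
      Finset.mem_sdiff.2 ⟨hV1 hi, hcon i hi⟩
    have h3 := Finset.card_le_card hsub
    have h4 : (Finset.range L \ Λ).card ≤ g L := by convert hΛ2
    omega
  obtain ⟨i, hiV, hiΛ⟩ := hex
  refine ⟨i, Finset.mem_range.1 (hV1 hiV), hball ?_⟩
  have h5 := hV2 i hiV
  have h6 := hΛ3 i hiΛ
  rw [Metric.mem_ball] at h5 ⊢
  have := dist_triangle_left (f^[i] z) x (f^[i] y)
  linarith

/-! ### Sparse sequences -/

theorem aux_sparse (l : ℕ → ℕ) : ∃ a : ℕ → ℕ, StrictMono a ∧ ∀ θ : ℝ, 0 < θ → ∃ J : ℕ,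
    ∀ j ≥ J, ((∑ i ∈ Finset.range j, Function.extend a l 0 i : ℕ) : ℝ) ≤ θ * j := by
  classical
  let S : ℕ → ℕ := fun k => ∑ i ∈ Finset.range (k + 1), l i
  let a : ℕ → ℕ := fun k => ∑ i ∈ Finset.range (k + 1), (i * S i + 1)
  have ha : StrictMono a := by
    refine strictMono_nat_of_lt_succ fun k => ?_
    simp only [a]
    rw [Finset.sum_range_succ _ (k + 1)]
    omega
  have haS : ∀ k, k * S k ≤ a k := by
    intro k
    simp only [a]
    rw [Finset.sum_range_succ _ k]
    omega
  refine ⟨a, ha, ?_⟩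
  have hsum : ∀ k, ∑ i ∈ Finset.range (a k), Function.extend a l 0 i
      = ∑ i ∈ Finset.range k, l i := by
    intro k
    have h1 : (Finset.range k).image a ⊆ Finset.range (a k) := by
      intro i hi
      obtain ⟨k', hk', rfl⟩ := Finset.mem_image.1 hi
      exact Finset.mem_range.2 (ha (Finset.mem_range.1 hk'))
    rw [← Finset.sum_subset h1, Finset.sum_image (fun _ _ _ _ h => ha.injective h)]
    · exact Finset.sum_congr rfl fun i _ => ha.injective.extend_apply _ _ _
    · intro i hi hni
      rw [Function.extend_apply']
      · rfl
      · rintro ⟨k', rfl⟩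
        exact hni (Finset.mem_image.2 ⟨k', Finset.mem_range.2
          (ha.lt_iff_lt.1 (Finset.mem_range.1 hi)), rfl⟩)
  intro θ hθ
  obtain ⟨k0, hk0⟩ := exists_nat_gt (1 / θ)
  have hk0pos : 0 < (k0 : ℝ) := lt_trans (by positivity) hk0
  refine ⟨a k0 + 1, fun j hj => ?_⟩
  have hex : ∃ k, j ≤ a k := ⟨j, ha.id_le j⟩
  set k := Nat.find hex with hk
  have hk1 : j ≤ a k := Nat.find_spec hex
  have hk2 : k0 < k := by
    by_contra! h
    have := ha.monotone h
    omega
  obtain ⟨k', hk'⟩ : ∃ k', k = k' + 1 := ⟨k - 1, by omega⟩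
  have hk3 : a k' < j := by
    have := Nat.find_min hex (m := k') (by omega)
    omega
  have h1 : ∑ i ∈ Finset.range j, Function.extend a l 0 i ≤ S k' := by
    calc _ ≤ ∑ i ∈ Finset.range (a k), Function.extend a l 0 i :=
          Finset.sum_le_sum_of_subset (Finset.range_subset_range.2 hk1)
      _ = S k' := by rw [hsum, hk']
  have h2 : k0 * S k' ≤ j := by
    calc k0 * S k' ≤ k' * S k' := Nat.mul_le_mul_right _ (by omega)
      _ ≤ a k' := haS k'
      _ ≤ j := hk3.le
  have h3 : (k0 : ℝ) * S k' ≤ j := by exact_mod_cast h2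
  have h4 : ((∑ i ∈ Finset.range j, Function.extend a l 0 i : ℕ) : ℝ) ≤ S k' := by exact_mod_cast h1
  have h5 : (1:ℝ) ≤ θ * k0 := by
    rw [div_lt_iff₀ hθ] at hk0
    linarith
  have h6 : (0:ℝ) ≤ S k' := Nat.cast_nonneg _
  nlinarith

/-! ### Lower bound for Bowen entropy of a coded set -/

theorem aux_hB_lower {X ι : Type*} [PseudoMetricSpace X] [Fintype ι] [Nonempty ι] (f : X → X)
    {Z : Set X} {ε s : ℝ} (z : (ℕ → ι) → X) (hz : ∀ c, z c ∈ Z) (T : ℕ)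
    (hne : {s : ℝ | mBLim f Z s ε = 0}.Nonempty)
    (h : ∀ t ≥ T, ∃ I : Finset ℕ, Real.exp (s * t) ≤ (Fintype.card ι : ℝ) ^ I.card ∧
      ∀ x c c', z c ∈ bowenBall f x t ε → z c' ∈ bowenBall f x t ε → ∀ i ∈ I, c i = c' i) :
    s ≤ hB f Z ε := by
  classical
  refine le_csInf hne fun s' hs' => ?_
  by_contra! hlt
  let : MeasurableSpace ι := ⊤
  have : MeasurableSingletonClass ι := ⟨fun _ => trivial⟩
  let ν0 : Measure ι := ProbabilityTheory.uniformOn Set.univ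
  have : IsProbabilityMeasure ν0 :=
    ProbabilityTheory.isProbabilityMeasure_uniformOn Set.finite_univ Set.univ_nonempty
  let ν : Measure (ℕ → ι) := Measure.infinitePi fun _ => ν0
  have hcard0 : (0:ℝ) < Fintype.card ι := by exact_mod_cast Fintype.card_pos
  have hν0 : ∀ a : ι, ν0 {a} = ENNReal.ofReal ((Fintype.card ι : ℝ)⁻¹) := by
    intro a
    simp only [ν0]
    rw [ProbabilityTheory.uniformOn_univ, Measure.count_singleton, ENNReal.ofReal_inv_of_pos hcard0,
      ENNReal.ofReal_natCast, one_div]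
  have hball : ∀ x, ∀ t ≥ T, ν {c | z c ∈ bowenBall f x t ε}
      ≤ ENNReal.ofReal (Real.exp (-s' * t)) := by
    intro x t ht
    obtain ⟨I, hI1, hI2⟩ := h t ht
    by_cases hemp : ∃ c0, z c0 ∈ bowenBall f x t ε
    · obtain ⟨c0, hc0⟩ := hemp
      have hsub : {c | z c ∈ bowenBall f x t ε} ⊆ (I : Set ℕ).pi fun i => {c0 i} := by
        intro c hc i hi
        exact hI2 x c c0 hc hc0 i hi
      refine (measure_mono hsub).trans ?_
      rw [Measure.infinitePi_pi _ (fun i _ => MeasurableSet.singleton _)]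
      simp only [hν0]
      rw [Finset.prod_const, ← ENNReal.ofReal_pow (by positivity)]
      apply ENNReal.ofReal_le_ofReal
      rw [inv_pow]
      have h1 : Real.exp (s' * t) ≤ (Fintype.card ι : ℝ) ^ I.card := by
        refine le_trans (Real.exp_le_exp.2 ?_) hI1
        have : (0:ℝ) ≤ t := Nat.cast_nonneg _
        nlinarith
      rw [neg_mul, Real.exp_neg]
      exact inv_anti₀ (Real.exp_pos _) h1
    · have : {c | z c ∈ bowenBall f x t ε} = ∅ := by
        ext c
        simp only [Set.mem_empty_iff_false, iff_false]
        exact fun hc => hemp ⟨c, hc⟩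
      rw [this]; simp
  have h1 : (1 : ℝ≥0∞) ≤ mB f Z s' T ε := by
    unfold mB
    refine le_iInf fun C => le_iInf fun hCc => le_iInf fun hCT => le_iInf fun hC => ?_
    have : Countable C := hCc.to_subtype
    calc (1 : ℝ≥0∞) = ν Set.univ := measure_univ.symm
      _ ≤ ν (⋃ p : C, {c | z c ∈ bowenBall f (p : X × ℕ).1 (p : X × ℕ).2 ε}) := by
          apply measure_mono
          intro c _
          have := hC (hz c)
          simp only [Set.mem_iUnion] at this ⊢
          obtain ⟨p, hp, hzp⟩ := this
          exact ⟨⟨p, hp⟩, hzp⟩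
      _ ≤ ∑' p : C, ν {c | z c ∈ bowenBall f (p : X × ℕ).1 (p : X × ℕ).2 ε} := measure_iUnion_le _
      _ ≤ coverSum s' C := ENNReal.tsum_le_tsum fun p => hball _ _ (hCT p p.2)
  have h2 : mB f Z s' T ε ≤ mBLim f Z s' ε := le_iSup (fun N => mB f Z s' N ε) T
  have h3 : mBLim f Z s' ε = 0 := hs'
  rw [h3] at h2
  exact absurd (h1.trans h2) (by simp)

/-! ### The main construction -/

/-- If a point tracks blocks with mean values oscillating along the scales `3^k`, then it is
irregular. -/
theorem aux_irregular {X : Type*} {f : X → X} {φ : X → ℝ} {B : ℝ} (hB0 : 0 ≤ B)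
    {n P : ℕ} (hn : 0 < n) (hP : 0 < P) {η : ℝ} (hη : 0 < η) {a vlo vhi : ℝ}
    (hgap : 40 * η * P < vhi - vlo) {v : ℕ → ℝ}
    (hv1 : ∀ j, ¬ P ∣ j → v j = a)
    (hv2 : ∀ q, v (P * q) = if Even (Nat.log 3 q) then vlo else vhi)
    {e len : ℕ → ℕ} (hlen1 : ∀ j, n ≤ len j) (hlen2 : ∀ j, len j ≤ n * (1 + e j))
    (he : ∀ θ : ℝ, 0 < θ → ∃ J : ℕ, ∀ j ≥ J, ((∑ i ∈ Finset.range j, e i : ℕ) : ℝ) ≤ θ * j)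
    {z : X} (hz : ∀ j, |birkhoffSum f φ (len j) (f^[∑ i ∈ Finset.range j, len i] z) - n * v j|
      ≤ 2 * n * η + 2 * n * B * e j) : z ∈ Iphi f φ := by
  rintro ⟨L, hL⟩
  have hn0 : (0:ℝ) < n := by exact_mod_cast hn
  have hP0 : (0:ℝ) < P := by exact_mod_cast hP
  set Mt : ℕ → ℕ := fun j => ∑ i ∈ Finset.range j, len i with hMt
  set D : ℕ → ℕ := fun j => ∑ i ∈ Finset.range j, e i with hD
  have hMt1 : ∀ j, n * j ≤ Mt j := by
    intro j
    calc n * j = ∑ i ∈ Finset.range j, n := by simp [mul_comm]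
      _ ≤ _ := Finset.sum_le_sum fun i _ => hlen1 i
  have hMt2 : ∀ j, Mt j ≤ n * (j + D j) := by
    intro j
    calc Mt j ≤ ∑ i ∈ Finset.range j, n * (1 + e i) := Finset.sum_le_sum fun i _ => hlen2 i
      _ = _ := by rw [← Finset.mul_sum, Finset.sum_add_distrib]; simp [hD]
  have hS : ∀ j, |birkhoffSum f φ (Mt j) z - n * ∑ i ∈ Finset.range j, v i|
      ≤ 2 * n * η * j + 2 * n * B * D j := by
    intro j
    induction j with
    | zero => simp [hMt, hD]
    | succ j ih =>
      have h1 : Mt (j + 1) = Mt j + len j := Finset.sum_range_succ _ _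
      have h2 : D (j + 1) = D j + e j := Finset.sum_range_succ _ _
      rw [h1, h2, birkhoffSum_add, Finset.sum_range_succ]
      have h3 := hz j
      push_cast
      rw [abs_le] at *
      constructor <;> linarith [ih.1, ih.2, h3.1, h3.2]
  -- compare with the limit
  have hV : ∃ J : ℕ, ∀ j ≥ J, |∑ i ∈ Finset.range j, v i - L * j| ≤ 5 * η * j := by
    obtain ⟨θ, hθ0, hθ1, hθ2⟩ : ∃ θ : ℝ, 0 < θ ∧ θ ≤ 1 ∧ (2 * B + |L|) * θ ≤ η := by
      have hpos : 0 < 2 * B + |L| + 1 := by positivity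
      refine ⟨min 1 (η / (2 * B + |L| + 1)), by positivity, min_le_left _ _, ?_⟩
      calc (2 * B + |L|) * min 1 (η / (2 * B + |L| + 1))
          ≤ (2 * B + |L| + 1) * (η / (2 * B + |L| + 1)) := by
            exact mul_le_mul (by linarith) (min_le_right _ _) (by positivity) (by positivity)
        _ = η := by field_simp
    obtain ⟨J1, hJ1⟩ := he θ hθ0
    obtain ⟨N, hN⟩ := Metric.tendsto_atTop.1 hL η hη
    refine ⟨max J1 (max N 1), fun j hj => ?_⟩
    have hj1 : J1 ≤ j := le_trans (le_max_left _ _) hj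
    have hj2 : N ≤ j := le_trans (le_trans (le_max_left _ _) (le_max_right _ _)) hj
    have hj3 : 1 ≤ j := le_trans (le_trans (le_max_right N 1) (le_max_right _ _)) hj
    have hj0 : (0:ℝ) < j := by exact_mod_cast hj3
    have hMj : j ≤ Mt j := le_trans (Nat.le_mul_of_pos_left j hn) (hMt1 j)
    have hM0 : (0:ℝ) < Mt j := lt_of_lt_of_le hj0 (by exact_mod_cast hMj)
    have hd : ((D j : ℕ) : ℝ) ≤ θ * j := hJ1 j hj1
    have hD0 : (0:ℝ) ≤ D j := Nat.cast_nonneg _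
    have h1 := hN (Mt j) (hj2.trans hMj)
    rw [Real.dist_eq] at h1
    have h2 : |birkhoffSum f φ (Mt j) z - L * Mt j| ≤ η * Mt j := by
      have : birkhoffSum f φ (Mt j) z - L * Mt j
          = ((∑ i ∈ Finset.range (Mt j), φ (f^[i] z)) / (Mt j : ℕ) - L) * Mt j := by
        unfold birkhoffSum
        field_simp
      rw [this, abs_mul, abs_of_pos hM0]
      gcongr
    have h3 : (n:ℝ) * j ≤ Mt j := by exact_mod_cast hMt1 j
    have h4 : (Mt j : ℝ) ≤ n * (j + D j) := by exact_mod_cast hMt2 j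
    have h5 : |L * Mt j - L * (n * j)| ≤ |L| * (n * D j) := by
      have h50 : (0:ℝ) ≤ Mt j - n * j := by linarith
      rw [← mul_sub, abs_mul, abs_of_nonneg h50]
      exact mul_le_mul_of_nonneg_left (by linarith) (abs_nonneg L)
    have h6 := hS j
    have h7 : |n * ∑ i ∈ Finset.range j, v i - L * (n * j)| ≤
        (2 * n * η * j + 2 * n * B * D j) + η * Mt j + |L| * (n * D j) := by
      rw [abs_le] at *
      constructor <;> linarith [h2.1, h2.2, h5.1, h5.2, h6.1, h6.2]
    have h8 : |n * ∑ i ∈ Finset.range j, v i - L * (n * j)|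
        = n * |∑ i ∈ Finset.range j, v i - L * j| := by
      rw [← abs_of_pos hn0, ← abs_mul, abs_of_pos hn0]
      congr 1; ring
    rw [h8] at h7
    have h9 : (2 * n * η * j + 2 * n * B * D j) + η * Mt j + |L| * (n * D j)
        ≤ n * (5 * η * j) := by
      have e1 : (2 * B + |L|) * D j ≤ η * j := by
        calc (2 * B + |L|) * D j ≤ (2 * B + |L|) * (θ * j) := by gcongr
          _ = ((2 * B + |L|) * θ) * j := by ring
          _ ≤ η * j := by gcongr
      have e2 : η * Mt j ≤ η * (n * (j + j)) := by
        have e4 : (D j : ℝ) ≤ j := by nlinarith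
        refine mul_le_mul_of_nonneg_left (h4.trans ?_) hη.le
        exact mul_le_mul_of_nonneg_left (by linarith) hn0.le
      have e3 := mul_le_mul_of_nonneg_left e1 hn0.le
      nlinarith
    exact le_of_mul_le_mul_left (h7.trans h9) hn0
  obtain ⟨J, hJ⟩ := hV
  -- sums over periods
  have hper : ∀ q, ∑ i ∈ Finset.range (P * q), v i
      = ∑ i ∈ Finset.range q, ((P - 1 : ℝ) * a + if Even (Nat.log 3 i) then vlo else vhi) := by
    intro q
    induction q with
    | zero => simp
    | succ q ih =>
      rw [Nat.mul_succ, Finset.sum_range_add, ih, Finset.sum_range_succ]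
      congr 1
      obtain ⟨P', rfl⟩ : ∃ P', P = P' + 1 := ⟨P - 1, by omega⟩
      rw [Finset.sum_range_succ', add_zero, hv2]
      have : ∀ i ∈ Finset.range P', v ((P' + 1) * q + (i + 1)) = a := by
        intro i hi
        apply hv1
        have hi' := Finset.mem_range.1 hi
        intro hdvd
        rw [Nat.dvd_add_right (Dvd.intro _ rfl)] at hdvd
        have := Nat.le_of_dvd (by omega) hdvd
        omega
      rw [Finset.sum_congr rfl this]
      simp
  have hval : ∀ k, J ≤ 3 ^ k → |(P - 1 : ℝ) * a + (if Even k then vlo else vhi) - L * P|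
      ≤ 10 * η * P := by
    intro k hk
    have hpow : 3 ^ (k + 1) = 3 ^ k + 2 * 3 ^ k := by rw [pow_succ]; ring
    have hge : ∀ k', k ≤ k' → J ≤ P * 3 ^ k' := fun k' hk' =>
      hk.trans ((Nat.pow_le_pow_right (by norm_num) hk').trans (Nat.le_mul_of_pos_left _ hP))
    have h1 := hJ _ (hge k le_rfl)
    have h2 := hJ _ (hge (k + 1) (by omega))
    rw [hper] at h1 h2
    have h3 : ∑ i ∈ Finset.range (3 ^ (k + 1)),
          ((P - 1 : ℝ) * a + if Even (Nat.log 3 i) then vlo else vhi)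
        = ∑ i ∈ Finset.range (3 ^ k),
          ((P - 1 : ℝ) * a + if Even (Nat.log 3 i) then vlo else vhi)
          + 2 * 3 ^ k * ((P - 1 : ℝ) * a + if Even k then vlo else vhi) := by
      rw [hpow, Finset.sum_range_add]
      congr 1
      have : ∀ i ∈ Finset.range (2 * 3 ^ k),
          ((P - 1 : ℝ) * a + if Even (Nat.log 3 (3 ^ k + i)) then vlo else vhi)
          = ((P - 1 : ℝ) * a + if Even k then vlo else vhi) := by
        intro i hi
        have hi' := Finset.mem_range.1 hi
        have : Nat.log 3 (3 ^ k + i) = k := by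
          apply Nat.log_eq_of_pow_le_of_lt_pow
          · omega
          · rw [hpow]; omega
        rw [this]
      rw [Finset.sum_congr rfl this, Finset.sum_const, Finset.card_range, nsmul_eq_mul]
      push_cast
      ring
    rw [h3] at h2
    push_cast at h1 h2
    rw [pow_succ] at h2
    have h30 : (0:ℝ) < 3 ^ k := by positivity
    set w := (P - 1 : ℝ) * a + (if Even k then vlo else vhi) with hw
    set T0 := ∑ i ∈ Finset.range (3 ^ k),
          ((P - 1 : ℝ) * a + if Even (Nat.log 3 i) then vlo else vhi) with hT0
    have h4 : |2 * 3 ^ k * (w - L * P)| ≤ 2 * 3 ^ k * (10 * η * P) := by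
      rw [abs_le] at *
      constructor <;> nlinarith [h1.1, h1.2, h2.1, h2.2]
    rw [abs_mul, abs_of_pos (by positivity)] at h4
    exact le_of_mul_le_mul_left h4 (by positivity)
  have h1 := hval (2 * J) (((Nat.lt_pow_self (by norm_num : 1 < 3)).le).trans
    (Nat.pow_le_pow_right (by norm_num) (by omega)))
  have h2 := hval (2 * J + 1) (((Nat.lt_pow_self (by norm_num : 1 < 3)).le).trans
    (Nat.pow_le_pow_right (by norm_num) (by omega)))
  rw [if_pos (by simp)] at h1
  rw [if_neg (by simp)] at h2
  rw [abs_le] at h1 h2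
  linarith [h1.1, h1.2, h2.1, h2.2]

theorem aux_core {X : Type*} [MetricSpace X] [CompactSpace X] [Nonempty X]
    [MeasurableSpace X] [BorelSpace X] {f : X → X} (hf : Continuous f) {g : ℕ → ℕ}
    (hg : IsBlowup g) {m : ℝ → ℕ} (hm : auxGlue f g m) {φ : X → ℝ} {B : ℝ}
    (hB : ∀ x, |φ x| ≤ B) {n P : ℕ} (hn : 0 < n) (hP : 0 < P) {ε1 : ℝ} (hε1 : 0 < ε1)
    (hmn : m ε1 ≤ n) {α β η : ℝ} (hη : 0 < η) (hgap : 40 * η * P < β - α) {lo hi : X}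
    (hlo : birkhoffSum f φ n lo ≤ n * α) (hhi : n * β ≤ birkhoffSum f φ n hi)
    (htr : ∀ x, ∀ z ∈ blowupBall f g x n ε1,
      |birkhoffSum f φ n z - birkhoffSum f φ n x| ≤ n * η)
    {a : ℝ} (ha : |a| ≤ B) {F : Set X} (hF : ∀ x ∈ F, |birkhoffSum f φ n x - n * a| ≤ n * η) :
    ∃ (Mt : ℕ → ℕ) (I : ℕ → Finset ℕ), Mt 0 = 0 ∧ StrictMono Mt ∧
      (∀ θ : ℝ, 0 < θ → ∃ J : ℕ, ∀ j ≥ J, (Mt j : ℝ) ≤ n * (1 + θ) * j ∧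
        (1 - 1 / (P:ℝ) - θ) * j - 1 ≤ (I j).card) ∧
      (∀ j, ∀ i ∈ I j, Mt i + n ≤ Mt j) ∧
      ∀ c : ℕ → X, (∀ i, c i ∈ F) → ∃ z ∈ Iphi f φ ∩ CtrSet f, ∀ j, ∀ i ∈ I j,
        f^[Mt i] z ∈ blowupBall f g (c i) n ε1 := by
  classical
  have hn0 : (0:ℝ) < n := by exact_mod_cast hn
  have hP0 : (0:ℝ) < P := by exact_mod_cast hP
  have hB0 : 0 ≤ B := (abs_nonneg _).trans (hB lo)
  obtain ⟨b, hbc, -, hbb⟩ := TopologicalSpace.exists_countable_basis X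
  obtain ⟨b', hb'⟩ := (hbc.union (Set.countable_singleton (Set.univ : Set X))).exists_eq_range
    ⟨Set.univ, Or.inr rfl⟩
  let U : ℕ → Set X := fun k => if auxGood f g m (b' (Nat.unpair k).1) then b' (Nat.unpair k).1
    else Set.univ
  have hU : ∀ k, auxGood f g m (U k) := by
    intro k
    simp only [U]
    split_ifs with h
    · exact h
    · exact aux_good_univ f g m
  choose r hr L0 hL0 using hU
  let l : ℕ → ℕ := fun k => L0 k + 1
  have hl1 : ∀ k, 1 ≤ l k := fun k => by simp [l]
  have hlL : ∀ k, L0 k ≤ n * l k := fun k => by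
    calc L0 k ≤ l k := by simp [l]
      _ ≤ n * l k := Nat.le_mul_of_pos_left _ hn
  have hmr : ∀ k, m (r k) ≤ n * l k := fun k => (hL0 k _ (hlL k)).1
  choose y hy using fun k => (hL0 k _ (hlL k)).2
  obtain ⟨A, hA, hAsp⟩ := aux_sparse l
  set e : ℕ → ℕ := Function.extend A l 0 with he
  let len : ℕ → ℕ := fun j => n * Function.extend A l (fun _ => 1) j
  let eps : ℕ → ℝ := fun j => Function.extend A r (fun _ => ε1) j
  let ctl : ℕ → X := fun j => if Even (Nat.log 3 (j / P)) then lo else hi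
  let pt : (ℕ → X) → ℕ → X := fun c =>
    Function.extend A y (fun j => if P ∣ j then ctl j else c j)
  have hlenT : ∀ k, len (A k) = n * l k := fun k => by
    simp only [len]; rw [hA.injective.extend_apply]
  have hepsT : ∀ k, eps (A k) = r k := fun k => by
    simp only [eps]; rw [hA.injective.extend_apply]
  have hptT : ∀ c k, pt c (A k) = y k := fun c k => by
    simp only [pt]; rw [hA.injective.extend_apply]
  have heT : ∀ k, e (A k) = l k := fun k => by
    rw [he, hA.injective.extend_apply]
  have hlenN : ∀ j, (¬ ∃ k, A k = j) → len j = n := fun j h => by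
    simp only [len]; rw [Function.extend_apply' _ _ _ h, mul_one]
  have hepsN : ∀ j, (¬ ∃ k, A k = j) → eps j = ε1 := fun j h => by
    simp only [eps]; rw [Function.extend_apply' _ _ _ h]
  have hptN : ∀ c j, (¬ ∃ k, A k = j) → pt c j = if P ∣ j then ctl j else c j := fun c j h => by
    simp only [pt]; rw [Function.extend_apply' _ _ _ h]
  have heN : ∀ j, (¬ ∃ k, A k = j) → e j = 0 := fun j h => by
    rw [he, Function.extend_apply' _ _ _ h]; rfl
  have hlen1 : ∀ j, n ≤ len j := by
    intro j
    by_cases h : ∃ k, A k = j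
    · obtain ⟨k, rfl⟩ := h
      rw [hlenT]
      exact Nat.le_mul_of_pos_right _ (hl1 k)
    · rw [hlenN j h]
  have hlen2 : ∀ j, len j ≤ n * (1 + e j) := by
    intro j
    by_cases h : ∃ k, A k = j
    · obtain ⟨k, rfl⟩ := h
      rw [hlenT, heT]
      exact Nat.mul_le_mul_left _ (by omega)
    · rw [hlenN j h, heN j h]; simp
  have heps0 : ∀ j, 0 < eps j := by
    intro j
    by_cases h : ∃ k, A k = j
    · obtain ⟨k, rfl⟩ := h
      rw [hepsT]; exact hr k
    · rw [hepsN j h]; exact hε1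
  have hmlen : ∀ j, m (eps j) ≤ len j := by
    intro j
    by_cases h : ∃ k, A k = j
    · obtain ⟨k, rfl⟩ := h
      rw [hepsT, hlenT]; exact hmr k
    · rw [hepsN j h, hlenN j h]; exact hmn
  set Mt : ℕ → ℕ := fun j => ∑ i ∈ Finset.range j, len i with hMt
  have hMts : ∀ j, Mt (j + 1) = Mt j + len j := fun j => Finset.sum_range_succ _ _
  have hMtmono : StrictMono Mt := strictMono_nat_of_lt_succ fun j => by
    rw [hMts]; have := hlen1 j; omega
  let I : ℕ → Finset ℕ := fun j => (Finset.range j).filter fun i => ¬ P ∣ i ∧ ¬ ∃ k, A k = i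
  refine ⟨Mt, I, by simp [hMt], hMtmono, ?_, ?_, ?_⟩
  · intro θ hθ
    obtain ⟨J, hJ⟩ := hAsp θ hθ
    refine ⟨J, fun j hj => ?_⟩
    have hd := hJ j hj
    constructor
    · have h4 : Mt j ≤ n * (j + ∑ i ∈ Finset.range j, e i) := by
        calc Mt j ≤ ∑ i ∈ Finset.range j, n * (1 + e i) := Finset.sum_le_sum fun i _ => hlen2 i
          _ = _ := by rw [← Finset.mul_sum, Finset.sum_add_distrib]; simp
      have h5 : (Mt j : ℝ) ≤ n * (j + (∑ i ∈ Finset.range j, e i : ℕ)) := by exact_mod_cast h4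
      calc (Mt j : ℝ) ≤ _ := h5
        _ ≤ n * (j + θ * j) := by gcongr
        _ = _ := by ring
    · have hsub : Finset.range j ⊆ I j ∪ ((Finset.range (j / P + 1)).image (fun q => P * q)
          ∪ (Finset.range j).filter fun i => ∃ k, A k = i) := by
        intro i hi
        have hi' := Finset.mem_range.1 hi
        by_cases h1 : P ∣ i
        · obtain ⟨q, rfl⟩ := h1
          refine Finset.mem_union_right _ (Finset.mem_union_left _ (Finset.mem_image.2 ⟨q, ?_, rfl⟩))
          rw [Finset.mem_range, Nat.lt_succ_iff, Nat.le_div_iff_mul_le hP, mul_comm]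
          exact hi'.le
        · by_cases h2 : ∃ k, A k = i
          · exact Finset.mem_union_right _ (Finset.mem_union_right _
              (Finset.mem_filter.2 ⟨hi, h2⟩))
          · exact Finset.mem_union_left _ (Finset.mem_filter.2 ⟨hi, h1, h2⟩)
      have h1 := Finset.card_le_card hsub
      have h2 := (Finset.card_union_le _ _).trans (Nat.add_le_add_left (Finset.card_union_le
        ((Finset.range (j / P + 1)).image (fun q => P * q))
        ((Finset.range j).filter fun i => ∃ k, A k = i)) (I j).card)
      have h3 : ((Finset.range (j / P + 1)).image (fun q => P * q)).card ≤ j / P + 1 :=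
        Finset.card_image_le.trans (by simp)
      have h4 : ((Finset.range j).filter fun i => ∃ k, A k = i).card
          ≤ ∑ i ∈ Finset.range j, e i := by
        rw [Finset.card_filter]
        refine Finset.sum_le_sum fun i _ => ?_
        split_ifs with h
        · obtain ⟨k, rfl⟩ := h
          rw [heT]; exact hl1 k
        · exact Nat.zero_le _
      rw [Finset.card_range] at h1
      have h5 : j ≤ (I j).card + (j / P + 1 + ∑ i ∈ Finset.range j, e i) := by omega
      have h6 : (j:ℝ) ≤ (I j).card + ((j / P : ℕ) + 1 + (∑ i ∈ Finset.range j, e i : ℕ)) := by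
        exact_mod_cast h5
      have h7 : ((j / P : ℕ) : ℝ) ≤ j / P := Nat.cast_div_le
      have h8 : (1 - 1 / (P:ℝ) - θ) * j = j - j / P - θ * j := by ring
      rw [h8]
      linarith
  · intro j i hi
    have hi1 := Finset.mem_range.1 (Finset.mem_filter.1 hi).1
    have h1 := hMtmono.monotone (Nat.succ_le_of_lt hi1)
    rw [Nat.succ_eq_add_one, hMts] at h1
    have := hlen1 i
    omega
  · intro c hc
    obtain ⟨z, hz⟩ := aux_glue hf hm (pt c) eps len heps0 hmlen
    refine ⟨z, ⟨?_, ?_⟩, ?_⟩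
    · -- irregularity
      let v : ℕ → ℝ := fun j => if P ∣ j then birkhoffSum f φ n (ctl j) / n else a
      refine aux_irregular (f := f) (φ := φ) (B := B) (n := n) (P := P) (η := η) (a := a)
        (vlo := birkhoffSum f φ n lo / n) (vhi := birkhoffSum f φ n hi / n) (v := v)
        (e := e) (len := len) hB0 hn hP hη ?_ ?_ ?_ hlen1 hlen2 hAsp ?_
      · have h1 : birkhoffSum f φ n lo / n ≤ α := by
          rw [div_le_iff₀ hn0]; linarith
        have h2 : β ≤ birkhoffSum f φ n hi / n := by
          rw [le_div_iff₀ hn0]; linarith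
        linarith
      · intro j hj
        simp only [v]; rw [if_neg hj]
      · intro q
        simp only [v, ctl]
        rw [if_pos (Dvd.intro _ rfl), Nat.mul_div_cancel_left _ hP]
        split_ifs <;> rfl
      · intro j
        have hzj := hz j
        have hvB : |v j| ≤ B := by
          simp only [v]
          split_ifs
          · rw [abs_div, abs_of_pos hn0, div_le_iff₀ hn0, mul_comm]
            exact aux_birk_abs hB n _
          · exact ha
        by_cases h : ∃ k, A k = j
        · obtain ⟨k, rfl⟩ := h
          rw [heT]
          have h1 := aux_birk_abs (f := f) hB (len (A k)) (f^[∑ i ∈ Finset.range (A k), len i] z)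
          have h2 : (len (A k) : ℝ) = n * l k := by rw [hlenT]; push_cast; ring
          rw [h2] at h1
          have h3 : |n * v (A k)| ≤ n * B := by
            rw [abs_mul, abs_of_pos hn0]; gcongr
          have h4 : (1:ℝ) ≤ l k := by exact_mod_cast hl1 k
          have h5 : n * B ≤ n * B * l k := le_mul_of_one_le_right (by positivity) h4
          have h6 := abs_sub (birkhoffSum f φ (len (A k)) (f^[∑ i ∈ Finset.range (A k), len i] z))
            (n * v (A k))
          have h7 : 0 ≤ 2 * n * η := by positivity
          linarith
        · rw [hepsN j h, hlenN j h, hptN c j h] at hzj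
          rw [heN j h, hlenN j h]
          have h1 := htr _ _ hzj
          have h2 : |birkhoffSum f φ n (if P ∣ j then ctl j else c j) - n * v j| ≤ n * η := by
            simp only [v]
            split_ifs with hd
            · rw [mul_div_cancel₀ _ hn0.ne', sub_self, abs_zero]; positivity
            · exact hF _ (hc j)
          have h3 := abs_sub_le (birkhoffSum f φ n (f^[∑ i ∈ Finset.range j, len i] z))
            (birkhoffSum f φ n (if P ∣ j then ctl j else c j)) (n * v j)
          push_cast
          linarith
    · -- the measure center is contained in the omega limit set
      change measCenter f ⊆ omegaSet f z
      have hcl : IsClosed (omegaSet f z) := isClosed_iInter fun _ => isClosed_closure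
      refine closure_minimal ?_ hcl
      intro x hx
      simp only [Set.mem_iUnion] at hx
      obtain ⟨μ, hμ, hxμ⟩ := hx
      refine Set.mem_iInter.2 fun N => ?_
      rw [mem_closure_iff_nhds]
      intro V hV
      obtain ⟨u, hub, hxu, huV⟩ := hbb.mem_nhds_iff.1 hV
      have hgood : auxGood f g m u :=
        aux_good_of_support hf hg m hμ hxμ (hbb.isOpen hub) hxu
      obtain ⟨q, hq⟩ : u ∈ Set.range b' := hb' ▸ Or.inl hub
      set k := Nat.pair q N with hk
      have hUk : U k = u := by
        simp only [U, hk, Nat.unpair_pair]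
        rw [hq, if_pos hgood]
      have hzk := hz (A k)
      rw [hepsT, hlenT, hptT] at hzk
      obtain ⟨i, -, hi⟩ := hy k _ hzk
      rw [hUk, ← Function.iterate_add_apply] at hi
      refine ⟨_, huV hi, i + Mt (A k), ?_, rfl⟩
      have h1 : N ≤ k := Nat.right_le_pair q N
      have h2 := hA.id_le k
      have h3 := hMtmono.id_le (A k)
      simp only [id] at h2 h3
      omega
    · intro j i hi
      obtain ⟨h1, h2, h3⟩ := Finset.mem_filter.1 hi
      have := hz i
      rw [hepsN i h3, hlenN i h3, hptN c i h3, if_neg h2] at this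
      exact this

/-! ### Final assembly -/

theorem aux_trace {X : Type*} [MetricSpace X] {f : X → X} {g : ℕ → ℕ} {φ : X → ℝ} {B : ℝ}
    (hB : ∀ x, |φ x| ≤ B) {η ε1 : ℝ} (hη : 0 < η) (hu : ∀ x y, dist x y ≤ ε1 → |φ x - φ y| ≤ η / 2)
    {n : ℕ} (hgn : 2 * B * g n ≤ η / 2 * n) (x z : X) (hz : z ∈ blowupBall f g x n ε1) :
    |birkhoffSum f φ n z - birkhoffSum f φ n x| ≤ n * η := by
  classical
  obtain ⟨Λ, hΛ, hc, hd⟩ := hz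
  have hB0 : 0 ≤ B := (abs_nonneg _).trans (hB x)
  unfold birkhoffSum
  rw [← Finset.sum_sub_distrib, ← Finset.sum_sdiff hΛ]
  have h1 : |∑ i ∈ Finset.range n \ Λ, (φ (f^[i] z) - φ (f^[i] x))| ≤ g n * (2 * B) := by
    refine (Finset.abs_sum_le_sum_abs _ _).trans ?_
    have : ∀ i ∈ Finset.range n \ Λ, |φ (f^[i] z) - φ (f^[i] x)| ≤ 2 * B := by
      intro i _
      have := hB (f^[i] z)
      have := hB (f^[i] x)
      rw [abs_le] at *
      constructor <;> linarith
    refine (Finset.sum_le_card_nsmul _ _ _ this).trans ?_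
    rw [nsmul_eq_mul]
    have hc' : ((Finset.range n \ Λ).card : ℝ) ≤ g n := by
      have : (Finset.range n \ Λ).card ≤ g n := by convert hc
      exact_mod_cast this
    gcongr
  have h2 : |∑ i ∈ Λ, (φ (f^[i] z) - φ (f^[i] x))| ≤ n * (η / 2) := by
    refine (Finset.abs_sum_le_sum_abs _ _).trans ?_
    have : ∀ i ∈ Λ, |φ (f^[i] z) - φ (f^[i] x)| ≤ η / 2 := by
      intro i hi
      exact hu _ _ (by rw [dist_comm]; exact hd i hi)
    refine (Finset.sum_le_card_nsmul _ _ _ this).trans ?_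
    rw [nsmul_eq_mul]
    have hc' : (Λ.card : ℝ) ≤ n := by
      have := Finset.card_le_card hΛ
      rw [Finset.card_range] at this
      exact_mod_cast this
    gcongr
  refine (abs_add_le _ _).trans ?_
  linarith

theorem aux_pigeon {X : Type*} {B η : ℝ} (hη : 0 < η) : ∃ R : ℕ, 0 < R ∧
    ∀ (h : X → ℝ) (_ : ∀ x, |h x| ≤ B) (F : Finset X), ∃ F' ⊆ F, F.card ≤ R * F'.card ∧
      ∀ x ∈ F', ∀ y ∈ F', |h x - h y| ≤ η := by
  classical
  refine ⟨⌊2 * B / η⌋₊ + 1, Nat.succ_pos _, fun h hh F => ?_⟩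
  set R := ⌊2 * B / η⌋₊ + 1 with hR
  let κ : X → ℕ := fun x => ⌊(h x + B) / η⌋₊
  have hκ : ∀ x ∈ F, κ x ∈ Finset.range R := by
    intro x _
    rw [Finset.mem_range, hR, Nat.lt_succ_iff]
    apply Nat.floor_le_floor
    have := (abs_le.1 (hh x)).2
    gcongr
    linarith
  obtain ⟨k, hk⟩ : ∃ k, F.card ≤ R * (F.filter fun x => κ x = k).card := by
    by_contra! hcon
    have h1 := Finset.card_eq_sum_card_fiberwise hκ
    have h2 : ∑ k ∈ Finset.range R, R * (F.filter fun x => κ x = k).card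
        < ∑ k ∈ Finset.range R, F.card :=
      Finset.sum_lt_sum_of_nonempty ⟨0, by simp [hR]⟩ fun k _ => hcon k
    rw [← Finset.mul_sum, ← h1] at h2
    simp at h2
  refine ⟨F.filter fun x => κ x = k, Finset.filter_subset _ _, hk, fun x hx y hy => ?_⟩
  have hx' := (Finset.mem_filter.1 hx).2
  have hy' := (Finset.mem_filter.1 hy).2
  have h0 : ∀ w, 0 ≤ (h w + B) / η := fun w => by
    have := (abs_le.1 (hh w)).1
    apply div_nonneg _ hη.le
    linarith
  have key : ∀ w, κ w = k → k * η ≤ h w + B ∧ h w + B < (k + 1) * η := by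
    intro w hw
    obtain ⟨h3, h4⟩ := (Nat.floor_eq_iff (h0 w)).1 hw
    rw [le_div_iff₀ hη] at h3
    rw [div_lt_iff₀ hη] at h4
    exact ⟨h3, h4⟩
  have a1 := key x hx'
  have a2 := key y hy'
  rw [abs_le]
  constructor <;> linarith [a1.1, a1.2, a2.1, a2.2]

theorem aux_agree {X : Type*} [MetricSpace X] {f : X → X} {g : ℕ → ℕ} {n : ℕ} {ε ε1 : ℝ}
    (hε : ε1 ≤ ε / 2) {a b z z' x : X} {M t : ℕ} (hMt : M + n ≤ t)
    (hsep : 2 * g n < (auxBad f a b n (3 * ε)).card)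
    (hz : f^[M] z ∈ blowupBall f g a n ε1) (hz' : f^[M] z' ∈ blowupBall f g b n ε1)
    (hx : z ∈ bowenBall f x t ε) (hx' : z' ∈ bowenBall f x t ε) : False := by
  classical
  obtain ⟨Λ, hΛ, hc, hd⟩ := hz
  obtain ⟨Λ', hΛ', hc', hd'⟩ := hz'
  have hc1 : (Finset.range n \ Λ).card ≤ g n := by convert hc
  have hc1' : (Finset.range n \ Λ').card ≤ g n := by convert hc'
  have hlt : ((Finset.range n \ Λ) ∪ (Finset.range n \ Λ')).card
      < (auxBad f a b n (3 * ε)).card :=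
    lt_of_le_of_lt (Finset.card_union_le _ _) (by omega)
  obtain ⟨k, hk, hk'⟩ := Finset.exists_mem_notMem_of_card_lt_card hlt
  simp only [auxBad, Finset.mem_filter, Finset.mem_range] at hk
  simp only [Finset.mem_union, Finset.mem_sdiff, Finset.mem_range, not_or, not_and, not_not] at hk'
  have h1 := hd k (hk'.1 hk.1)
  have h2 := hd' k (hk'.2 hk.1)
  rw [← Function.iterate_add_apply] at h1 h2
  have h3 := hx (k + M) (by omega)
  have h4 := hx' (k + M) (by omega)
  have t1 := dist_triangle4 (f^[k] a) (f^[k + M] z) (f^[k + M] z') (f^[k] b)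
  have t2 := dist_triangle_left (f^[k + M] z) (f^[k + M] z') (f^[k + M] x)
  rw [dist_comm (f^[k + M] z') (f^[k] b)] at t1
  linarith [hk.2]

theorem aux_from_core {X : Type*} [MetricSpace X] {f : X → X} {g : ℕ → ℕ} {Z : Set X}
    {ε ε1 u s' : ℝ} {n P : ℕ} (hn : 0 < n)
    (hne : {s : ℝ | mBLim f Z s ε = 0}.Nonempty) (hs' : 0 < s') (hu0 : 0 < u)
    (hu : s' < u * (1 - 1 / (P:ℝ))) (hε : ε1 ≤ ε / 2) {F : Finset X} (hFne : F.Nonempty)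
    (hcard : Real.exp (u * n) ≤ F.card)
    (hsep : ∀ x ∈ F, ∀ y ∈ F, x ≠ y → 2 * g n < (auxBad f x y n (3 * ε)).card)
    {Mt : ℕ → ℕ} {I : ℕ → Finset ℕ} (hM0 : Mt 0 = 0) (hMt : StrictMono Mt)
    (hgr : ∀ θ : ℝ, 0 < θ → ∃ J : ℕ, ∀ j ≥ J, (Mt j : ℝ) ≤ n * (1 + θ) * j ∧
        (1 - 1 / (P:ℝ) - θ) * j - 1 ≤ (I j).card)
    (hI : ∀ j, ∀ i ∈ I j, Mt i + n ≤ Mt j)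
    (hz : ∀ c : ℕ → X, (∀ i, c i ∈ F) → ∃ z ∈ Z, ∀ j, ∀ i ∈ I j,
        f^[Mt i] z ∈ blowupBall f g (c i) n ε1) : s' ≤ hB f Z ε := by
  classical
  have hn0 : (0:ℝ) < n := by exact_mod_cast hn
  have : Nonempty F := hFne.to_subtype
  choose z hzZ hzt using fun c : ℕ → F => hz (fun i => (c i : X)) fun i => (c i).2
  set p : ℝ := 1 - 1 / (P:ℝ) with hp
  obtain ⟨ρ, hρ⟩ : ∃ ρ, ρ = u * p - s' := ⟨_, rfl⟩
  have hρ0 : 0 < ρ := by rw [hρ]; linarith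
  obtain ⟨θ, hθ⟩ : ∃ θ, θ = ρ / (2 * (u + s')) := ⟨_, rfl⟩
  have hθ0 : 0 < θ := by rw [hθ]; positivity
  have hθ1 : θ * (u + s') = ρ / 2 := by rw [hθ]; field_simp
  obtain ⟨J, hJ⟩ := hgr θ hθ0
  obtain ⟨J2, hJ2⟩ := exists_nat_ge ((s' * (1 + θ) + u) / (ρ / 2))
  refine aux_hB_lower f z hzZ (Mt (max J J2)) hne fun t ht => ?_
  obtain ⟨j, hj, hj1, hj2⟩ : ∃ j, max J J2 ≤ j ∧ Mt j ≤ t ∧ t < Mt (j + 1) := by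
    have hex : ∃ k, t < Mt k := ⟨t + 1, lt_of_lt_of_le (Nat.lt_succ_self t) hMt.le_apply⟩
    have hf0 := Nat.find_spec hex
    have hpos : max J J2 < Nat.find hex := by
      by_contra! hle
      exact absurd (lt_of_lt_of_le hf0 (hMt.monotone hle)) (not_lt.2 ht)
    refine ⟨Nat.find hex - 1, by omega, ?_, ?_⟩
    · exact not_lt.1 (Nat.find_min hex (by omega))
    · rwa [Nat.sub_add_cancel (by omega)]
  refine ⟨I j, ?_, ?_⟩
  · have hjJ : J ≤ j := (le_max_left _ _).trans hj
    have hjJ2 : (J2:ℝ) ≤ j := by exact_mod_cast (le_max_right _ _).trans hj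
    have h1 := (hJ (j + 1) (by omega)).1
    have h2 := (hJ j hjJ).2
    have h3 : (t:ℝ) ≤ Mt (j + 1) := by exact_mod_cast hj2.le
    push_cast at h1
    have h4 : s' * (1 + θ) + u ≤ j * (ρ / 2) := by
      rw [div_le_iff₀ (by positivity)] at hJ2
      refine hJ2.trans ?_
      gcongr
    have h5 : s' * ((1 + θ) * (j + 1)) ≤ u * ((p - θ) * j - 1) := by
      have e1 : u * ((p - θ) * j - 1) - s' * ((1 + θ) * (j + 1))
          = j * (u * p - s' - θ * (u + s')) - (s' * (1 + θ) + u) := by ring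
      rw [← hρ, hθ1] at e1
      linarith
    have h6 : s' * t ≤ u * n * (I j).card := by
      calc s' * t ≤ s' * (n * (1 + θ) * (j + 1)) := by gcongr; exact h3.trans h1
        _ = n * (s' * ((1 + θ) * (j + 1))) := by ring
        _ ≤ n * (u * ((p - θ) * j - 1)) := by gcongr
        _ ≤ n * (u * (I j).card) := by gcongr
        _ = _ := by ring
    calc Real.exp (s' * t) ≤ Real.exp (u * n * (I j).card) := Real.exp_le_exp.2 h6
      _ = Real.exp (u * n) ^ (I j).card := by rw [← Real.exp_nat_mul]; ring_nf
      _ ≤ (Fintype.card F : ℝ) ^ (I j).card := by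
        rw [Fintype.card_coe]
        gcongr
  · intro x c c' hc hc' i hi
    by_contra hcc
    exact aux_agree hε ((hI j i hi).trans hj1)
      (hsep _ (c i).2 _ (c' i).2 fun h => hcc (Subtype.ext h))
      (hzt c j i hi) (hzt c' j i hi) hc hc'

theorem aux_unif {X : Type*} [MetricSpace X] [CompactSpace X] {φ : X → ℝ} (hφ : Continuous φ)
    {η ε : ℝ} (hη : 0 < η) (hε : 0 < ε) : ∃ ε1 : ℝ, 0 < ε1 ∧ ε1 ≤ ε / 2 ∧
      ∀ x y, dist x y ≤ ε1 → |φ x - φ y| ≤ η / 2 := by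
  obtain ⟨δ, hδ, h⟩ := Metric.uniformContinuous_iff.1
    (CompactSpace.uniformContinuous_of_continuous hφ) (η / 2) (by linarith)
  refine ⟨min (δ / 2) (ε / 2), by positivity, min_le_right _ _, fun x y hxy => ?_⟩
  have : dist x y < δ := by linarith [min_le_left (δ / 2) (ε / 2)]
  have := h this
  rw [Real.dist_eq] at this
  exact this.le

theorem aux_g_small {g : ℕ → ℕ} (hg : IsBlowup g) (K : ℝ) {κ : ℝ} (hκ : 0 < κ) :
    ∀ᶠ n : ℕ in atTop, K * g n ≤ κ * n := by
  have h := hg.ratio_tendsto_zero.const_mul K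
  rw [mul_zero] at h
  filter_upwards [h.eventually_lt_const hκ, eventually_gt_atTop 0] with n hn hn0
  have hn0 : (0:ℝ) < n := by exact_mod_cast hn0
  have h1 : K * ((g n : ℝ) / n) * n = K * g n := by field_simp
  rw [← h1]
  gcongr

theorem aux_avg {X : Type*} {f : X → X} {φ : X → ℝ} {B : ℝ} (hB : ∀ x, |φ x| ≤ B)
    {n : ℕ} (hn : 0 < n) (x : X) : |birkhoffSum f φ n x / n| ≤ B := by
  have hn0 : (0:ℝ) < n := by exact_mod_cast hn
  rw [abs_div, abs_of_pos hn0, div_le_iff₀ hn0, mul_comm]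
  exact aux_birk_abs hB n x

theorem aux_nonempty {X : Type*} [MetricSpace X] [CompactSpace X] [Nonempty X]
    [MeasurableSpace X] [BorelSpace X] {f : X → X} (hf : Continuous f) {g : ℕ → ℕ}
    (hg : IsBlowup g) {m : ℝ → ℕ} (hm : auxGlue f g m) {φ : X → ℝ} (hφ : Continuous φ) {B : ℝ}
    (hB : ∀ x, |φ x| ≤ B) (hne : (Iphi f φ).Nonempty) : (Iphi f φ ∩ CtrSet f).Nonempty := by
  obtain ⟨α, β, hαβ, hlh⟩ := aux_lohi hB hne
  obtain ⟨x⟩ := ‹Nonempty X›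
  have : Nonempty X := ⟨x⟩
  obtain ⟨η, hηd⟩ : ∃ η, η = (β - α) / 41 := ⟨_, rfl⟩
  have hη : 0 < η := by rw [hηd]; linarith
  obtain ⟨ε1, hε1, -, hu⟩ := aux_unif hφ hη one_pos
  obtain ⟨n, ⟨h1, h2⟩, h3⟩ := (((eventually_gt_atTop 0).and (eventually_ge_atTop (m ε1))).and
    (aux_g_small hg (2 * B) (half_pos hη))).exists
  have hn0 : (0:ℝ) < n := by exact_mod_cast h1
  obtain ⟨⟨lo, hlo⟩, ⟨hi, hhi⟩⟩ := hlh n h1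
  obtain ⟨Mt, I, -, -, -, -, h⟩ := aux_core hf hg hm hB h1 one_pos hε1 h2 hη
    (α := α) (β := β) (by push_cast; rw [hηd]; linarith) hlo hhi (aux_trace hB hη hu h3)
    (aux_avg hB h1 x) (F := {x}) (by
      rintro y rfl
      rw [mul_div_cancel₀ _ hn0.ne']
      rw [sub_self, abs_zero]
      positivity)
  obtain ⟨z, hz, -⟩ := h (fun _ => x) fun _ => rfl
  exact ⟨z, hz⟩

theorem aux_main {X : Type*} [MetricSpace X] [CompactSpace X] [Nonempty X]
    [MeasurableSpace X] [BorelSpace X] {f : X → X} (hf : Continuous f) {g : ℕ → ℕ}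
    (hg : IsBlowup g) {m : ℝ → ℕ} (hm : auxGlue f g m) {φ : X → ℝ} (hφ : Continuous φ) {B : ℝ}
    (hB : ∀ x, |φ x| ≤ B) (hne : (Iphi f φ).Nonempty) {ε : ℝ} (hε : 0 < ε) :
    MMD.hB f Set.univ (7 * ε) ≤ MMD.hB f (Iphi f φ ∩ CtrSet f) ε := by
  by_contra! hcon
  have hnn := aux_hB_nonneg f (aux_nonempty hf hg hm hφ hB hne) ε
  obtain ⟨s', h1s, h2s⟩ := exists_between hcon
  obtain ⟨s, h3s, h4s⟩ := exists_between h2s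
  have hs'0 : 0 < s' := by linarith
  refine absurd h1s (not_lt.2 ?_)
  obtain ⟨γ, hγd⟩ : ∃ γ, γ = (s - s') / 4 := ⟨_, rfl⟩
  have hγ : 0 < γ := by rw [hγd]; linarith
  obtain ⟨u, hud⟩ : ∃ u, u = s - 2 * γ := ⟨_, rfl⟩
  have hus : s' < u := by rw [hud, hγd]; linarith
  have hu0 : 0 < u := by linarith
  obtain ⟨δ, hδ, hham⟩ := aux_ham_cover f hε hγ
  obtain ⟨c, hc, N, hN⟩ := aux_card_lower f h4s
  obtain ⟨P, hP0, hP⟩ : ∃ P : ℕ, 0 < P ∧ s' < u * (1 - 1 / (P:ℝ)) := by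
    obtain ⟨P, hP⟩ := exists_nat_gt (u / (u - s'))
    have h0 : 0 < u - s' := by linarith
    have hPr : (0:ℝ) < P := lt_trans (by positivity) hP
    refine ⟨P, by exact_mod_cast hPr, ?_⟩
    rw [div_lt_iff₀ h0] at hP
    have : u / P < u - s' := by rw [div_lt_iff₀ hPr]; linarith
    have e : u * (1 - 1 / (P:ℝ)) = u - u / P := by ring
    rw [e]; linarith
  have hPr : (0:ℝ) < P := by exact_mod_cast hP0
  obtain ⟨α, β, hαβ, hlh⟩ := aux_lohi hB hne
  obtain ⟨η, hηd⟩ : ∃ η, η = (β - α) / (41 * P) := ⟨_, rfl⟩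
  have hη : 0 < η := by rw [hηd]; apply div_pos <;> [linarith; positivity]
  have hgap : 40 * η * P < β - α := by
    have : 41 * (η * P) = β - α := by rw [hηd]; field_simp
    have : 0 < η * P := by positivity
    linarith
  obtain ⟨ε1, hε1, hε1', hu⟩ := aux_unif hφ hη hε
  obtain ⟨R, hR, hpig⟩ := aux_pigeon (X := X) (B := B) hη
  have hbig : ∀ᶠ n : ℕ in atTop, (R:ℝ) ≤ c * Real.exp (γ * n) := by
    have ht : Tendsto (fun n : ℕ => c * Real.exp (γ * n)) atTop atTop :=
      (Real.tendsto_exp_atTop.comp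
        (tendsto_natCast_atTop_atTop.const_mul_atTop hγ)).const_mul_atTop hc
    exact ht.eventually_ge_atTop _
  obtain ⟨n, hn, hmn, hNn, hg1, hg2, hbn⟩ := ((eventually_gt_atTop 0).and
    ((eventually_ge_atTop (m ε1)).and ((eventually_ge_atTop N).and
    ((aux_g_small hg (2 * B) (half_pos hη)).and
    ((aux_g_small hg 2 (half_pos hδ)).and hbig))))).exists
  have hn0 : (0:ℝ) < n := by exact_mod_cast hn
  obtain ⟨F, hFsep, hFcard⟩ := aux_sep_exists f hε hδ hn (Real.exp_pos (γ * n)) (hham n)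
    (hN n hNn)
  obtain ⟨F', hF'F, hF'c, hF'a⟩ := hpig (fun x => birkhoffSum f φ n x / n)
    (fun x => aux_avg hB hn x) F
  have hcard : Real.exp (u * n) ≤ F'.card := by
    have e1 : (F.card : ℝ) ≤ R * F'.card := by exact_mod_cast hF'c
    have hRr : (0:ℝ) < R := by exact_mod_cast hR
    have e2 : Real.exp (s * n) = Real.exp (u * n) * Real.exp (γ * n) * Real.exp (γ * n) := by
      rw [← Real.exp_add, ← Real.exp_add, hud]; ring_nf
    have hE : 0 < Real.exp (γ * n) := Real.exp_pos _
    have e3 : R * Real.exp (u * n) * Real.exp (γ * n) ≤ R * F'.card * Real.exp (γ * n) := by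
      calc R * Real.exp (u * n) * Real.exp (γ * n)
          ≤ (c * Real.exp (γ * n)) * Real.exp (u * n) * Real.exp (γ * n) := by gcongr
        _ = c * Real.exp (s * n) := by rw [e2]; ring
        _ ≤ F.card * Real.exp (γ * n) := hFcard
        _ ≤ _ := by gcongr
    exact le_of_mul_le_mul_left (le_of_mul_le_mul_right e3 hE) hRr
  have hF'ne : F'.Nonempty := by
    rw [← Finset.card_pos]
    have := lt_of_lt_of_le (Real.exp_pos _) hcard
    exact_mod_cast this
  obtain ⟨x0, hx0⟩ := hF'ne
  obtain ⟨⟨lo, hlo⟩, ⟨hi, hhi⟩⟩ := hlh n hn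
  obtain ⟨Mt, I, hM0, hMt, hgr, hI, hz⟩ := aux_core hf hg hm hB hn hP0 hε1 hmn hη
    hgap hlo hhi (aux_trace hB hη hu hg1) (aux_avg hB hn x0) (F := (F' : Set X)) (by
      intro x hx
      have h := hF'a x hx x0 hx0
      have e : birkhoffSum f φ n x - n * (birkhoffSum f φ n x0 / n)
          = n * (birkhoffSum f φ n x / n - birkhoffSum f φ n x0 / n) := by field_simp
      rw [e, abs_mul, abs_of_pos hn0]
      gcongr)
  refine aux_from_core (g := g) hn ?_ hs'0 hu0 hP hε1' ⟨x0, hx0⟩ hcard ?_ hM0 hMt hgr hI hz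
  · obtain ⟨s, hs⟩ := aux_nonempty_set f hε
    exact ⟨s, le_antisymm ((aux_mBLim_mono f (Set.subset_univ _) s ε).trans hs.le) bot_le⟩
  · intro x hx y hy hxy
    have h := hFsep x (hF'F hx) y (hF'F hy) hxy
    have : (2 * g n : ℝ) < (auxBad f x y n (3 * ε)).card := by
      have : 0 < δ * n := by positivity
      linarith
    exact_mod_cast this

theorem stmt7 {X : Type*} [MetricSpace X] [CompactSpace X] [Nonempty X]
    [MeasurableSpace X] [BorelSpace X]
    (f : X → X) (hf : Continuous f) (g : ℕ → ℕ) (hg : IsBlowup g)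
    (hgap : GAlmostProduct f g)
    (φ : X → ℝ) (hφ : Continuous φ) (hne : (Iphi f φ).Nonempty) :
    (Iphi f φ ∩ CtrSet f).Nonempty ∧
    mdimUpper f (Iphi f φ) = mdimUpper f (Iphi f φ ∩ CtrSet f) ∧
    mdimUpper f (Iphi f φ) = mdimUpper f (Set.univ : Set X) := by
  obtain ⟨m, -, hm⟩ := hgap
  have hm : auxGlue f g m := hm
  obtain ⟨B, hB⟩ : ∃ B : ℝ, ∀ x, |φ x| ≤ B := by
    obtain ⟨B, hB⟩ := isCompact_univ.exists_bound_of_continuousOn hφ.continuousOn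
    exact ⟨B, fun x => hB x (Set.mem_univ x)⟩
  have hne' := aux_nonempty hf hg hm hφ hB hne
  have hu0 : ∀ ε > 0, 0 ≤ MMD.hB f (Iphi f φ ∩ CtrSet f) ε := fun ε _ => aux_hB_nonneg f hne' ε
  have hwu : ∀ ε > 0, MMD.hB f Set.univ (7 * ε) ≤ MMD.hB f (Iphi f φ ∩ CtrSet f) ε :=
    fun ε hε => aux_main hf hg hm hφ hB hne hε
  have h1 : mdimUpper f (Iphi f φ ∩ CtrSet f) = mdimUpper f (Set.univ : Set X) :=
    aux_limsup_eq hu0 (fun ε _ => le_rfl)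
      (fun ε hε => aux_hB_mono f hne' (Set.subset_univ _) hε) hwu
  have h2 : mdimUpper f (Iphi f φ) = mdimUpper f (Set.univ : Set X) :=
    aux_limsup_eq hu0 (fun ε hε => aux_hB_mono f hne' Set.inter_subset_left hε)
      (fun ε hε => aux_hB_mono f hne (Set.subset_univ _) hε) hwu
  exact ⟨hne', h2.trans h1.symm, h2⟩

end
end
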